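/- arXiv:2301.07031 — 6 statements merged into one kernel-verified Lean document; each statement's English description precedes it below -/
import Mathlib

section
/- Let λ > 0, let x ∈ ℝ³ and r > 0, and let φ be a smooth real-valued function defined on an open neighborhood of the closed ball B(x, r) ⊂ ℝ³ satisfying Δφ = −λφ there. If φ(x) = 0, then ∫_{‖x−y‖ ≤ r} φ(y)/‖y−x‖ dy = 0; that is, the positive and negative mass of φ around one of its roots is perfectly balanced when integrated against the Coulomb kernel. -/
open scoped Real
open MeasureTheory

/-- The Euclidean Laplacian `Δf(x) = Σᵢ ∂²f/∂xᵢ²(x)` of `f : ℝ^d → ℝ`. -/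
noncomputable def euclidLaplacian {d : ℕ} (f : EuclideanSpace ℝ (Fin d) → ℝ)
    (x : EuclideanSpace ℝ (Fin d)) : ℝ :=
  ∑ i, fderiv ℝ (fun y => fderiv ℝ f y (EuclideanSpace.single i 1)) x (EuclideanSpace.single i 1)

open Set Filter Topology Metric
open scoped Pointwise ContDiff

abbrev E3 := EuclideanSpace ℝ (Fin 3)
noncomputable abbrev sg : Measure (sphere (0 : E3) 1) := (volume : Measure E3).toSphere

lemma deriv_under (g g' : ℝ → sphere (0 : E3) 1 → ℝ)
    (hg : ∀ t, Continuous (g t)) (hg' : Continuous (Function.uncurry g'))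
    (hd : ∀ t w, HasDerivAt (fun t => g t w) (g' t w) t) (t : ℝ) :
    HasDerivAt (fun t => ∫ w, g t w ∂sg) (∫ w, g' t w ∂sg) t := by
  obtain ⟨C, hC⟩ := ((isCompact_closedBall t 1).prod
    (isCompact_univ (X := sphere (0 : E3) 1))).exists_bound_of_continuousOn hg'.continuousOn
  refine (hasDerivAt_integral_of_dominated_loc_of_deriv_le (s := closedBall t 1)
    (bound := fun _ => C) (closedBall_mem_nhds t one_pos) ?_ ?_ ?_ ?_ ?_ ?_).2
  · exact Eventually.of_forall fun s => (hg s).aestronglyMeasurable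
  · exact (hg t).integrable_of_hasCompactSupport (HasCompactSupport.of_compactSpace _)
  · exact (hg'.comp (Continuous.prodMk continuous_const continuous_id)).aestronglyMeasurable
  · exact Eventually.of_forall fun w s hs => hC (s, w) ⟨hs, mem_univ _⟩
  · exact integrable_const _
  · exact Eventually.of_forall fun w s hs => hd s w

lemma int_sph {g : sphere (0 : E3) 1 → ℝ} (hg : Continuous g) : Integrable g sg :=
  hg.integrable_of_hasCompactSupport (HasCompactSupport.of_compactSpace _)

lemma sphere_rot (R : E3 ≃ₗᵢ[ℝ] E3) (f : E3 → ℝ) (hf : Continuous f) :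
    ∫ w, f (R w) ∂sg = ∫ w : sphere (0 : E3) 1, f w ∂sg := by
  let e : sphere (0 : E3) 1 → sphere (0 : E3) 1 := fun w => ⟨R w, by simp⟩
  have he : Continuous e := by
    apply Continuous.subtype_mk; fun_prop
  have hmap : Measure.map e sg = sg := by
    ext s hs
    rw [Measure.map_apply he.measurable hs, Measure.toSphere_apply' _ (he.measurable hs),
      Measure.toSphere_apply' _ hs]
    congr 1
    have : Ioo (0 : ℝ) 1 • ((↑) '' (e ⁻¹' s) : Set E3) = R ⁻¹' (Ioo (0 : ℝ) 1 • ((↑) '' s)) := by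
      ext y
      simp only [mem_preimage, Set.mem_smul, mem_image]
      constructor
      · rintro ⟨t, ht, _, ⟨w, hw, rfl⟩, rfl⟩
        exact ⟨t, ht, _, ⟨e w, hw, rfl⟩, by simp [e]⟩
      · rintro ⟨t, ht, _, ⟨w, hw, rfl⟩, h⟩
        refine ⟨t, ht, _, ⟨⟨R.symm w, by simp⟩, ?_, rfl⟩, ?_⟩
        · simpa [e] using hw
        · apply R.injective
          simpa using h
    rw [this]
    exact R.measurePreserving.measure_preimage_emb R.toHomeomorph.measurableEmbedding _
  conv_rhs => rw [← hmap]
  rw [integral_map he.aemeasurable]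
  exact (hf.comp continuous_subtype_val).aestronglyMeasurable

noncomputable def gen (u v : E3) : E3 →L[ℝ] E3 :=
  (innerSL ℝ u).smulRight v - (innerSL ℝ v).smulRight u

lemma gen_apply (u v y : E3) : gen u v y = inner ℝ u y • v - inner ℝ v y • u := by
  simp [gen]

noncomputable def rotL (u v : E3) (θ : ℝ) : E3 →L[ℝ] E3 :=
  ContinuousLinearMap.id ℝ E3 + (Real.cos θ - 1) • ((innerSL ℝ u).smulRight u + (innerSL ℝ v).smulRight v)
    + Real.sin θ • gen u v

lemma rotL_apply (u v : E3) (θ : ℝ) (y : E3) : rotL u v θ y =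
    y + (Real.cos θ - 1) • (inner ℝ u y • u + inner ℝ v y • v) + Real.sin θ • gen u v y := by
  simp [rotL]

lemma rotL_norm {u v : E3} (hu : inner ℝ u u = (1 : ℝ)) (hv : inner ℝ v v = (1 : ℝ))
    (huv : inner ℝ u v = (0 : ℝ)) (θ : ℝ) (y : E3) : ‖rotL u v θ y‖ = ‖y‖ := by
  have hvu : inner ℝ v u = (0 : ℝ) := by rw [real_inner_comm]; exact huv
  have h : ‖rotL u v θ y‖ ^ 2 = ‖y‖ ^ 2 := by
    rw [← real_inner_self_eq_norm_sq, ← real_inner_self_eq_norm_sq, rotL_apply, gen_apply]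
    simp only [inner_add_left, inner_add_right, inner_sub_left, inner_sub_right,
      real_inner_smul_left, real_inner_smul_right, hu, hv, huv, hvu,
      real_inner_comm u y, real_inner_comm v y]
    have := Real.sin_sq_add_cos_sq θ
    linear_combination (inner ℝ u y ^ 2 + inner ℝ v y ^ 2) * this
  exact (pow_left_inj₀ (norm_nonneg _) (norm_nonneg _) two_ne_zero).1 h

lemma rot1 {u v : E3} (hu : inner ℝ u u = (1 : ℝ)) (hv : inner ℝ v v = (1 : ℝ))
    (huv : inner ℝ u v = (0 : ℝ)) (f : E3 → ℝ) (hf : ContDiff ℝ ∞ f) (s : ℝ) :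
    ∫ w : sphere (0 : E3) 1, fderiv ℝ f (s • w.1) (gen u v (s • w.1)) ∂sg = 0 := by
  have hfd : Continuous (fderiv ℝ f) := hf.continuous_fderiv (by simp)
  have hfc := hf.continuous
  have key := deriv_under (fun θ w => f (rotL u v θ (s • w.1)))
    (fun θ w => fderiv ℝ f (rotL u v θ (s • w.1))
      ((-Real.sin θ) • (inner ℝ u (s • w.1) • u + inner ℝ v (s • w.1) • v)
        + Real.cos θ • gen u v (s • w.1))) ?_ ?_ ?_ 0
  · have hconst : (fun θ => ∫ w : sphere (0 : E3) 1, f (rotL u v θ (s • w.1)) ∂sg)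
        = fun _ => ∫ w : sphere (0 : E3) 1, f (s • w.1) ∂sg := by
      funext θ
      let R : E3 →ₗᵢ[ℝ] E3 := ⟨(rotL u v θ).toLinearMap, rotL_norm hu hv huv θ⟩
      have := sphere_rot (R.toLinearIsometryEquiv rfl) (fun y => f (s • y)) (by fun_prop)
      rw [← this]
      congr 1
      funext w
      simp [R]
    rw [hconst] at key
    have := key.unique (hasDerivAt_const _ _)
    simpa [rotL] using this
  · intro θ; fun_prop
  · simp only [Function.uncurry_def, rotL_apply]
    apply Continuous.clm_apply
    · apply hfd.comp
      fun_prop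
    · fun_prop
  · intro θ w
    have hc : HasDerivAt (fun θ => rotL u v θ (s • w.1))
      ((-Real.sin θ) • (inner ℝ u (s • w.1) • u + inner ℝ v (s • w.1) • v)
        + Real.cos θ • gen u v (s • w.1)) θ := by
      simp only [rotL_apply]
      have h1 := ((Real.hasDerivAt_cos θ).sub_const 1).smul_const
        (inner ℝ u (s • w.1) • u + inner ℝ v (s • w.1) • v)
      have h2 := (Real.hasDerivAt_sin θ).smul_const (gen u v (s • w.1))
      exact (h1.const_add _).add h2
    exact ((hf.differentiable (by simp) _).hasFDerivAt).comp_hasDerivAt θ hc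

lemma rot2 {u v : E3} (hu : inner ℝ u u = (1 : ℝ)) (hv : inner ℝ v v = (1 : ℝ))
    (huv : inner ℝ u v = (0 : ℝ)) (f : E3 → ℝ) (hf : ContDiff ℝ ∞ f) (s : ℝ) :
    ∫ w : sphere (0 : E3) 1, (fderiv ℝ (fderiv ℝ f) (s • w.1) (gen u v (s • w.1)) (gen u v (s • w.1))
      + fderiv ℝ f (s • w.1) (gen u v (gen u v (s • w.1)))) ∂sg = 0 := by
  have hfd : ContDiff ℝ ∞ (fderiv ℝ f) := hf.fderiv_right (by simp)
  have := rot1 hu hv huv (fun y => fderiv ℝ f y (gen u v y)) (by fun_prop) s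
  rw [← this]
  congr 1
  funext w
  have hd := ((hfd.differentiable (by simp) (s • w.1)).hasFDerivAt).clm_apply
    ((gen u v).hasFDerivAt (x := s • w.1))
  rw [hd.fderiv]
  simp [add_comm]
  ring

lemma alg (B : E3 →L[ℝ] E3 →L[ℝ] ℝ) (hB : ∀ a b, B a b = B b a) (L : E3 →L[ℝ] ℝ) (y : E3)
    (e : Fin 3 → E3) (he : e = fun i => EuclideanSpace.single i 1) :
    (B (gen (e 0) (e 1) y) (gen (e 0) (e 1) y) + L (gen (e 0) (e 1) (gen (e 0) (e 1) y)))
    + (B (gen (e 0) (e 2) y) (gen (e 0) (e 2) y) + L (gen (e 0) (e 2) (gen (e 0) (e 2) y)))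
    + (B (gen (e 1) (e 2) y) (gen (e 1) (e 2) y) + L (gen (e 1) (e 2) (gen (e 1) (e 2) y)))
    = ‖y‖ ^ 2 * ∑ i, B (e i) (e i) - B y y - 2 * L y := by
  have hin : ∀ i (z : E3), inner ℝ (e i) z = z i := by
    intro i z; simp [he, EuclideanSpace.inner_single_left]
  have hee : ∀ i j, e i j = if j = i then 1 else 0 := by
    intro i j; simp [he, Pi.single_apply]
  have hy : y = y 0 • e 0 + y 1 • e 1 + y 2 • e 2 := by
    ext j; fin_cases j <;> simp [hee]
  have hn : ‖y‖ ^ 2 = y 0 ^ 2 + y 1 ^ 2 + y 2 ^ 2 := by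
    rw [EuclideanSpace.real_norm_sq_eq, Fin.sum_univ_three]
  have hBy : B y y = B (y 0 • e 0 + y 1 • e 1 + y 2 • e 2) (y 0 • e 0 + y 1 • e 1 + y 2 • e 2) := by
    rw [← hy]
  have hLy : L y = L (y 0 • e 0 + y 1 • e 1 + y 2 • e 2) := by rw [← hy]
  rw [hBy, hLy, hn, Fin.sum_univ_three]
  simp only [gen_apply, hin, map_sub, map_add, map_smul, ContinuousLinearMap.sub_apply,
    ContinuousLinearMap.add_apply, ContinuousLinearMap.smul_apply, smul_eq_mul, hee,
    PiLp.sub_apply, PiLp.smul_apply, hB (e 1) (e 0), hB (e 2) (e 0), hB (e 2) (e 1)]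
  simp
  ring

lemma lap_eq (f : E3 → ℝ) (hf : ContDiff ℝ ∞ f) (y : E3) : euclidLaplacian f y =
    ∑ i, fderiv ℝ (fderiv ℝ f) y (EuclideanSpace.single i 1) (EuclideanSpace.single i 1) := by
  have hfd : ContDiff ℝ ∞ (fderiv ℝ f) := hf.fderiv_right (by simp)
  unfold euclidLaplacian
  refine Finset.sum_congr rfl fun i _ => ?_
  rw [fderiv_clm_apply (hfd.differentiable (by simp) _) (by fun_prop)]
  simp

lemma sphere_identity (f : E3 → ℝ) (hf : ContDiff ℝ ∞ f) (s : ℝ) :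
    ∫ w : sphere (0 : E3) 1, (s ^ 2 * euclidLaplacian f (s • w.1)
      - s ^ 2 * fderiv ℝ (fderiv ℝ f) (s • w.1) w.1 w.1 - 2 * s * fderiv ℝ f (s • w.1) w.1) ∂sg = 0 := by
  have hfd : ContDiff ℝ ∞ (fderiv ℝ f) := hf.fderiv_right (by simp)
  have hc1 : Continuous (fderiv ℝ f) := hfd.continuous
  have hc2 : Continuous (fderiv ℝ (fderiv ℝ f)) := hfd.continuous_fderiv (by simp)
  set e : Fin 3 → E3 := fun i => EuclideanSpace.single i 1 with he
  have hself : ∀ i, inner ℝ (e i) (e i) = (1 : ℝ) := by intro i; simp [he]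
  have hne : ∀ i j, i ≠ j → inner ℝ (e i) (e j) = (0 : ℝ) := by
    intro i j h; simp [he, EuclideanSpace.inner_single_left, h]
  have hint : ∀ i j, Integrable (fun w : sphere (0 : E3) 1 =>
      (fderiv ℝ (fderiv ℝ f) (s • w.1) (gen (e i) (e j) (s • w.1)) (gen (e i) (e j) (s • w.1))
      + fderiv ℝ f (s • w.1) (gen (e i) (e j) (gen (e i) (e j) (s • w.1))))) sg := by
    intro i j
    apply int_sph
    have h1 : Continuous fun w : sphere (0 : E3) 1 => s • w.1 := by fun_prop
    have h2 : Continuous fun w : sphere (0 : E3) 1 => gen (e i) (e j) (s • w.1) := by fun_prop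
    exact (((hc2.comp h1).clm_apply h2).clm_apply h2).add
      ((hc1.comp h1).clm_apply ((gen (e i) (e j)).continuous.comp h2))
  have h01 := rot2 (hself 0) (hself 1) (hne 0 1 (by decide)) f hf s
  have h02 := rot2 (hself 0) (hself 2) (hne 0 2 (by decide)) f hf s
  have h12 := rot2 (hself 1) (hself 2) (hne 1 2 (by decide)) f hf s
  have hsum := integral_add ((hint 0 1).add (hint 0 2)) (hint 1 2)
  have hsum2 := integral_add (hint 0 1) (hint 0 2)
  simp only [Pi.add_apply] at hsum
  rw [hsum2, h01, h02, h12, add_zero, add_zero] at hsum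
  rw [← hsum]
  congr 1
  funext w
  have hw : ‖w.1‖ = 1 := by simp
  rw [alg _ (fun a b => ?_) _ _ e he, lap_eq f hf, norm_smul, hw]
  · simp only [map_smul, ContinuousLinearMap.smul_apply, smul_eq_mul, Real.norm_eq_abs, mul_one,
      sq_abs]
    ring
  · exact (hf.contDiffAt.isSymmSndFDerivAt (by
      rw [minSmoothness_of_isRCLikeNormedField]; exact WithTop.coe_le_coe.2 (le_top : (2 : ℕ∞) ≤ ⊤))) a b

lemma sphere_zero (f : E3 → ℝ) (hf : ContDiff ℝ ∞ f) (lam r : ℝ) (hlam : 0 < lam)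
    (heig : ∀ y ∈ closedBall (0 : E3) r, euclidLaplacian f y = -lam * f y) (h0 : f 0 = 0)
    (s : ℝ) (hs : 0 < s) (hsr : s ≤ r) : ∫ w : sphere (0 : E3) 1, f (s • w.1) ∂sg = 0 := by
  have hfd : ContDiff ℝ ∞ (fderiv ℝ f) := hf.fderiv_right (by simp)
  have hc0 : Continuous f := hf.continuous
  have hc1 : Continuous (fderiv ℝ f) := hfd.continuous
  have hc2 : Continuous (fderiv ℝ (fderiv ℝ f)) := hfd.continuous_fderiv (by simp)
  have hline : ∀ (t : ℝ) (w : E3), HasDerivAt (fun t : ℝ => t • w) w t := by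
    intro t w
    simpa using (hasDerivAt_id t).smul_const w
  set M : ℝ → ℝ := fun t => ∫ w : sphere (0 : E3) 1, f (t • w.1) ∂sg with hM
  set M1 : ℝ → ℝ := fun t => ∫ w : sphere (0 : E3) 1, fderiv ℝ f (t • w.1) w.1 ∂sg with hM1
  set M2 : ℝ → ℝ := fun t => ∫ w : sphere (0 : E3) 1,
    fderiv ℝ (fderiv ℝ f) (t • w.1) w.1 w.1 ∂sg with hM2
  have hp : Continuous fun p : ℝ × sphere (0 : E3) 1 => p.1 • p.2.1 := by fun_prop
  have hw : Continuous fun p : ℝ × sphere (0 : E3) 1 => p.2.1 := by fun_prop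
  have hpt : ∀ t : ℝ, Continuous fun w : sphere (0 : E3) 1 => t • w.1 := fun t => by fun_prop
  have hwt : Continuous fun w : sphere (0 : E3) 1 => w.1 := by fun_prop
  have hcf1 : ∀ t : ℝ, Continuous fun w : sphere (0 : E3) 1 => fderiv ℝ f (t • w.1) w.1 :=
    fun t => (hc1.comp (hpt t)).clm_apply hwt
  have hcf2 : ∀ t : ℝ, Continuous fun w : sphere (0 : E3) 1 =>
      fderiv ℝ (fderiv ℝ f) (t • w.1) w.1 w.1 :=
    fun t => ((hc2.comp (hpt t)).clm_apply hwt).clm_apply hwt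
  have hd1 : ∀ t, HasDerivAt M (M1 t) t := by
    apply deriv_under
    · intro t; exact hc0.comp (hpt t)
    · exact (hc1.comp hp).clm_apply hw
    · intro t w
      exact ((hf.differentiable (by simp) _).hasFDerivAt).comp_hasDerivAt t (hline t w.1)
  have hd2 : ∀ t, HasDerivAt M1 (M2 t) t := by
    apply deriv_under
    · exact hcf1
    · exact ((hc2.comp hp).clm_apply hw).clm_apply hw
    · intro t w
      have := ((hfd.differentiable (by simp) _).hasFDerivAt).comp_hasDerivAt t (hline t w.1)
      simpa using this.clm_apply (hasDerivAt_const t w.1)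
  have hode : ∀ t, 0 < t → t ≤ r → 2 * M1 t + t * M2 t = -lam * (t * M t) := by
    intro t ht htr
    have h := sphere_identity f hf t
    have hI0 : Integrable (fun w : sphere (0 : E3) 1 => f (t • w.1)) sg :=
      int_sph (hc0.comp (hpt t))
    have hI1 := int_sph (hcf1 t)
    have hI2 := int_sph (hcf2 t)
    have h' : ∫ w : sphere (0 : E3) 1, (t ^ 2 * (-lam) * f (t • w.1)
      - t ^ 2 * fderiv ℝ (fderiv ℝ f) (t • w.1) w.1 w.1 - 2 * t * fderiv ℝ f (t • w.1) w.1) ∂sg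
        = 0 := by
      rw [← h]
      congr 1
      funext w
      rw [heig]
      · ring
      · simp [norm_smul, abs_of_pos ht, htr]
    have hI02 : Integrable (fun w : sphere (0 : E3) 1 => t ^ 2 * (-lam) * f (t • w.1)
        - t ^ 2 * fderiv ℝ (fderiv ℝ f) (t • w.1) w.1 w.1) sg :=
      (hI0.const_mul _).sub (hI2.const_mul _)
    rw [integral_sub hI02 (hI1.const_mul _),
      integral_sub (hI0.const_mul _) (hI2.const_mul _), integral_const_mul, integral_const_mul,
      integral_const_mul] at h'
    change t ^ 2 * (-lam) * M t - t ^ 2 * M2 t - 2 * t * M1 t = 0 at h'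
    apply mul_left_cancel₀ ht.ne'
    linear_combination -h'
  have hM0 : M 0 = 0 := by simp [hM, h0]
  have hE : ∀ t, HasDerivAt (fun t => (M t + t * M1 t) ^ 2 + lam * (t * M t) ^ 2)
      (2 * (M t + t * M1 t) * (2 * M1 t + t * M2 t) + lam * (2 * (t * M t) * (M t + t * M1 t))) t := by
    intro t
    have a1 := (hasDerivAt_id t).mul (hd1 t)
    have a2 := (hd1 t).add ((hasDerivAt_id t).mul (hd2 t))
    have := (a2.pow 2).add ((a1.pow 2).const_mul lam)
    refine HasDerivAt.congr_deriv this ?_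
    simp only [id, Pi.add_apply, Pi.mul_apply]
    push_cast
    ring
  have hconst := constant_of_has_deriv_right_zero (a := 0) (b := r)
    (f := fun t => (M t + t * M1 t) ^ 2 + lam * (t * M t) ^ 2)
    (fun t _ => (hE t).continuousAt.continuousWithinAt) (by
      intro t ht
      have := (hE t).hasDerivWithinAt (s := Ici t)
      convert this using 1
      rcases ht.1.eq_or_lt with h | h
      · subst h; simp [hM0]
      · rw [hode t h ht.2.le]; ring) s ⟨hs.le, hsr⟩
  simp only [hM0, zero_mul, add_zero, mul_zero] at hconst
  have h1 : (s * M s) ^ 2 = 0 := by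
    have := sq_nonneg (M s + s * M1 s)
    have := sq_nonneg (s * M s)
    nlinarith
  have h2 : s * M s = 0 := by simpa using h1
  exact (mul_eq_zero.1 h2).resolve_left hs.ne'

lemma ball_zero (f : E3 → ℝ) (r : ℝ)
    (h : ∀ s : ℝ, 0 < s → s ≤ r → ∫ w : sphere (0 : E3) 1, f (s • w.1) ∂sg = 0) :
    ∫ y in closedBall (0 : E3) r, f y / ‖y‖ = 0 := by
  set g : E3 → ℝ := (closedBall (0 : E3) r).indicator fun y => f y / ‖y‖ with hg
  rw [← integral_indicator isClosed_closedBall.measurableSet]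
  change ∫ y, g y = 0
  have h1 : ∫ y, g y = ∫ p, g (p.2.1 • p.1.1)
      ∂((volume : Measure E3).toSphere.prod (.volumeIoiPow (Module.finrank ℝ E3 - 1))) := by
    rw [← (volume : Measure E3).measurePreserving_homeomorphUnitSphereProd.integral_comp
        (Homeomorph.measurableEmbedding _) (fun p => g (p.2.1 • p.1.1))]
    have : ∀ x : ({0}ᶜ : Set E3), g ((homeomorphUnitSphereProd E3 x).2.1 •
        (homeomorphUnitSphereProd E3 x).1.1) = g x := by
      intro x
      congr 1
      have hx : ‖x.1‖ ≠ 0 := norm_ne_zero_iff.2 x.2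
      simp [smul_smul, hx]
    simp only [this]
    rw [integral_subtype_comap (measurableSet_singleton _).compl g,
        restrict_compl_singleton]
  rw [h1]
  by_cases hi : Integrable (fun p : sphere (0 : E3) 1 × Ioi (0 : ℝ) => g (p.2.1 • p.1.1))
      ((volume : Measure E3).toSphere.prod (.volumeIoiPow (Module.finrank ℝ E3 - 1)))
  · rw [integral_prod_symm _ hi]
    apply integral_eq_zero_of_ae
    refine Eventually.of_forall fun s => ?_
    obtain ⟨s, hs⟩ := s
    have hs : 0 < s := hs
    by_cases hsr : s ≤ r
    · have : ∀ w : sphere (0 : E3) 1, g (s • w.1) = f (s • w.1) / s := by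
        intro w
        have hn : ‖s • w.1‖ = s := by simp [norm_smul, abs_of_pos hs]
        rw [hg, indicator_of_mem (by simpa [hn] using hsr), hn]
      simp only [this, integral_div, h s hs hsr]
      simp
    · have : ∀ w : sphere (0 : E3) 1, g (s • w.1) = 0 := by
        intro w
        have hn : ‖s • w.1‖ = s := by simp [norm_smul, abs_of_pos hs]
        rw [hg, indicator_of_notMem (by simpa [hn] using hsr)]
      simp [this]
  · exact integral_undef hi

/-- If `−Δφ = λφ` on a neighborhood of the closed ball `B(x,r) ⊂ ℝ³` and `φ(x) = 0`,
then the mass of `φ` around the root `x` is perfectly balanced against the Coulomb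
kernel: `∫_{‖x−y‖ ≤ r} φ(y)/‖y−x‖ dy = 0`. -/
theorem eigenfunction_coulomb_balance_at_root (lam : ℝ) (hlam : 0 < lam)
    (x : EuclideanSpace ℝ (Fin 3)) (r : ℝ) (hr : 0 < r)
    (U : Set (EuclideanSpace ℝ (Fin 3))) (hU : IsOpen U) (hBU : Metric.closedBall x r ⊆ U)
    (φ : EuclideanSpace ℝ (Fin 3) → ℝ) (hφ : ContDiffOn ℝ (⊤ : ℕ∞) φ U)
    (heig : ∀ y ∈ U, euclidLaplacian φ y = -lam * φ y)
    (hroot : φ x = 0) :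
    ∫ y in Metric.closedBall x r, φ y / ‖y - x‖ = 0 := by
  obtain ⟨δ, hδ, hsub⟩ := (isCompact_closedBall x r).exists_cthickening_subset_open hU hBU
  rw [cthickening_closedBall hδ.le hr.le] at hsub
  let χ : ContDiffBump x := ⟨r + δ / 2, r + δ, by positivity, by linarith⟩
  let ψ : E3 → ℝ := fun y => χ y * φ y
  have hψ : ContDiff ℝ ∞ ψ := by
    rw [contDiff_iff_contDiffAt]
    intro y
    by_cases hy : y ∈ U
    · exact χ.contDiffAt.mul (hφ.contDiffAt (hU.mem_nhds hy))
    · have hy' : y ∉ tsupport χ := by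
        rw [χ.tsupport_eq]
        intro h
        exact hy (hsub (by simpa [χ, add_comm] using h))
      have : ψ =ᶠ[𝓝 y] fun _ => 0 := by
        filter_upwards [notMem_tsupport_iff_eventuallyEq.1 hy'] with z hz
        simp [ψ, hz]
      exact contDiffAt_const.congr_of_eventuallyEq this
  have hev : ∀ y ∈ closedBall x r, ψ =ᶠ[𝓝 y] φ := by
    intro y hy
    have : y ∈ ball x χ.rIn := closedBall_subset_ball (by simp [χ, hδ]) hy
    filter_upwards [χ.eventuallyEq_one_of_mem_ball this] with z hz
    simp [ψ, hz]
  let f : E3 → ℝ := fun y => ψ (x + y)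
  have hf : ContDiff ℝ ∞ f := by
    exact hψ.comp (by fun_prop)
  have hlapf : ∀ y, euclidLaplacian f y = euclidLaplacian ψ (x + y) := by
    intro y
    unfold euclidLaplacian
    refine Finset.sum_congr rfl fun i _ => ?_
    simp only [f, fderiv_comp_add_left]
    rw [fderiv_comp_add_left (f := fun z => fderiv ℝ ψ z (EuclideanSpace.single i 1))]
  have hlapψ : ∀ y ∈ closedBall x r, euclidLaplacian ψ y = euclidLaplacian φ y := by
    intro y hy
    unfold euclidLaplacian
    refine Finset.sum_congr rfl fun i _ => ?_
    have : (fun z => fderiv ℝ ψ z (EuclideanSpace.single i 1)) =ᶠ[𝓝 y]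
        (fun z => fderiv ℝ φ z (EuclideanSpace.single i 1)) := by
      filter_upwards [(hev y hy).fderiv (𝕜 := ℝ)] with z hz
      rw [hz]
    rw [this.fderiv_eq]
  have hmem : ∀ y ∈ closedBall (0 : E3) r, x + y ∈ closedBall x r := by
    intro y hy; simpa using hy
  have hres := ball_zero f r (sphere_zero f hf lam r hlam (by
    intro y hy
    have hy' := hmem y hy
    rw [hlapf, hlapψ _ hy', heig _ (hBU hy')]
    simp only [f]
    rw [(hev _ hy').eq_of_nhds]) (by simp [f, ψ, hroot]))
  rw [← hres, ← integral_indicator isClosed_closedBall.measurableSet,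
    ← integral_indicator isClosed_closedBall.measurableSet, ← integral_add_left_eq_self _ x]
  congr 1
  funext y
  by_cases hy : y ∈ closedBall (0 : E3) r
  · rw [indicator_of_mem hy, indicator_of_mem (hmem y hy)]
    simp only [f]
    rw [(hev _ (hmem y hy)).eq_of_nhds, add_sub_cancel_left]
  · rw [indicator_of_notMem hy, indicator_of_notMem]
    simpa using hy
end

section
/- Let λ > 0 and x ∈ ℝ³, set r = 2π/√λ, and let φ be a smooth real-valued function defined on an open neighborhood of the closed ball B(x, r) ⊂ ℝ³ satisfying Δφ = −λφ there. Then ∫_{‖x−y‖ ≤ 2π λ^{-1/2}} φ(y)/‖y−x‖ dy = 0; that is, on every ball of radius 2π λ^{-1/2} the positive and negative mass of φ balance exactly with respect to the Coulomb kernel, regardless of the value φ(x). -/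
open scoped Real
open MeasureTheory

lemma polar_zero (g : EuclideanSpace ℝ (Fin 3) → ℝ)
    (h : ∀ σ : EuclideanSpace ℝ (Fin 3), ‖σ‖ = 1 →
      ∫ ρ in Set.Ioi (0 : ℝ), ρ ^ 2 * g (ρ • σ) = 0) : ∫ y, g y = 0 := by
  have e1 : ∫ y, g y = ∫ y : ({0}ᶜ : Set (EuclideanSpace ℝ (Fin 3))), g y
      ∂((volume : Measure (EuclideanSpace ℝ (Fin 3))).comap (↑)) := by
    rw [integral_subtype_comap (measurableSet_singleton _).compl g, restrict_compl_singleton]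
  have e2 : ∫ y : ({0}ᶜ : Set (EuclideanSpace ℝ (Fin 3))), g y
      ∂((volume : Measure (EuclideanSpace ℝ (Fin 3))).comap (↑)) =
      ∫ p, g (p.2.1 • p.1.1) ∂((volume : Measure (EuclideanSpace ℝ (Fin 3))).toSphere.prod
        (.volumeIoiPow (Module.finrank ℝ (EuclideanSpace ℝ (Fin 3)) - 1))) := by
    rw [← (volume : Measure (EuclideanSpace ℝ (Fin 3))).measurePreserving_homeomorphUnitSphereProd.integral_comp
        (Homeomorph.measurableEmbedding _)]
    congr 1
    ext y
    have := homeomorphUnitSphereProd_symm_apply_coe (EuclideanSpace ℝ (Fin 3))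
      (homeomorphUnitSphereProd _ y)
    rw [Homeomorph.symm_apply_apply] at this
    rw [← this]
  rw [e1, e2]
  by_cases hi : Integrable (fun p : (Metric.sphere (0 : EuclideanSpace ℝ (Fin 3)) 1) × (Set.Ioi (0:ℝ)) => g (p.2.1 • p.1.1)) ((volume : Measure (EuclideanSpace ℝ (Fin 3))).toSphere.prod
        (.volumeIoiPow (Module.finrank ℝ (EuclideanSpace ℝ (Fin 3)) - 1)))
  · rw [integral_prod _ hi]
    rw [integral_eq_zero_of_ae]
    filter_upwards with σ
    have := h σ.1 (by simp)
    simp only [Measure.volumeIoiPow, ENNReal.ofReal, Pi.zero_apply]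
    rw [integral_withDensity_eq_integral_smul,
        integral_subtype_comap measurableSet_Ioi fun a ↦ Real.toNNReal (a ^ (Module.finrank ℝ (EuclideanSpace ℝ (Fin 3)) - 1)) • g (a • σ.1)]
    · refine (setIntegral_congr_fun measurableSet_Ioi fun x hx ↦ ?_).trans this
      have hx' : (0 : ℝ) < x := hx
      beta_reduce
      rw [NNReal.smul_def, Real.coe_toNNReal _ (pow_nonneg hx'.le _)]
      simp
    · exact (measurable_subtype_coe.pow_const _).real_toNNReal
  · exact integral_undef hi

/-- radial profile -/
noncomputable def prof (k ρ : ℝ) : ℝ := (1 - Real.cos (k * ρ)) / ρ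

noncomputable def prof' (k ρ : ℝ) : ℝ :=
  (k * ρ * Real.sin (k * ρ) - (1 - Real.cos (k * ρ))) / ρ ^ 2

lemma prof_hasDerivAt (k ρ : ℝ) (hρ : ρ ≠ 0) : HasDerivAt (prof k) (prof' k ρ) ρ := by
  have h1 : HasDerivAt (fun ρ : ℝ => k * ρ) k ρ := by
    simpa using (hasDerivAt_id ρ).const_mul k
  have := (h1.cos.const_sub 1).div (hasDerivAt_id ρ) hρ
  convert! this using 1
  simp only [prof', id]
  ring

lemma prof'_bound (k ρ : ℝ) (hk : 0 < k) (hρ : 0 < ρ) : |prof' k ρ| ≤ 2 * k ^ 2 := by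
  unfold prof'
  rw [abs_div, abs_of_pos (by positivity : 0 < ρ ^ 2), div_le_iff₀ (by positivity)]
  have hp : 0 < k * ρ := by positivity
  have h1 := Real.one_sub_sq_div_two_le_cos (x := k * ρ)
  have h2 := Real.cos_le_one (k * ρ)
  have h3 : |Real.sin (k * ρ)| ≤ k * ρ := by
    simpa [abs_of_pos hp, abs_of_pos hk, abs_of_pos hρ] using Real.abs_sin_le_abs (x := k * ρ)
  rw [abs_le] at h3
  rw [abs_le]
  constructor <;> nlinarith [mul_le_mul_of_nonneg_left h3.1 hp.le, mul_le_mul_of_nonneg_left h3.2 hp.le]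

lemma prof_lip (k : ℝ) (hk : 0 < k) :
    LipschitzOnWith (2 * k ^ 2).toNNReal (prof k) (Set.Ici 0) := by
  have hI : ∀ a ∈ Set.Ioi (0 : ℝ), ∀ b ∈ Set.Ioi (0 : ℝ),
      ‖prof k b - prof k a‖ ≤ 2 * k ^ 2 * ‖b - a‖ := fun a ha b hb =>
    (convex_Ioi (0 : ℝ)).norm_image_sub_le_of_norm_hasDerivWithin_le
      (fun y hy => (prof_hasDerivAt k y (ne_of_gt hy)).hasDerivWithinAt)
      (fun y hy => prof'_bound k y hk hy) ha hb
  have h0 : ∀ a ∈ Set.Ioi (0 : ℝ), |prof k a| ≤ 2 * k ^ 2 * a := by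
    intro a ha
    have ha : 0 < a := ha
    unfold prof
    have h1 := Real.one_sub_sq_div_two_le_cos (x := k * a)
    have h2 := Real.cos_le_one (k * a)
    rw [abs_div, abs_of_pos ha, div_le_iff₀ ha, abs_of_nonneg (by linarith)]
    nlinarith [mul_pos (mul_pos hk ha) (mul_pos hk ha)]
  have hz : prof k 0 = 0 := by simp [prof]
  refine LipschitzOnWith.of_dist_le_mul fun a ha b hb => ?_
  rw [Real.coe_toNNReal _ (by positivity), dist_eq_norm, dist_eq_norm]
  rcases eq_or_lt_of_le (show (0:ℝ) ≤ a from ha) with rfl | ha'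
  · rcases eq_or_lt_of_le (show (0:ℝ) ≤ b from hb) with rfl | hb'
    · simp
    · simpa [hz, abs_of_pos hb'] using h0 b hb'
  · rcases eq_or_lt_of_le (show (0:ℝ) ≤ b from hb) with rfl | hb'
    · simpa [hz, abs_of_pos ha'] using h0 a ha'
    · exact hI b hb' a ha'

lemma Psi_lip (k R : ℝ) (hk : 0 < k) (hR : 0 ≤ R) (x : EuclideanSpace ℝ (Fin 3)) :
    ∃ C, LipschitzWith C (fun y : EuclideanSpace ℝ (Fin 3) => prof k (min ‖y - x‖ R)) := by
  have h1 : LipschitzWith 1 (fun y : EuclideanSpace ℝ (Fin 3) => min ‖y - x‖ R) := by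
    have : LipschitzWith 1 (fun y : EuclideanSpace ℝ (Fin 3) => ‖y - x‖) := by
      simpa [dist_eq_norm] using LipschitzWith.dist_left x
    exact this.min_const R
  refine ⟨(2 * k ^ 2).toNNReal * 1, ?_⟩
  rw [← lipschitzOnWith_univ] at h1 ⊢
  exact (prof_lip k hk).comp h1 fun y _ => le_min (norm_nonneg _) hR

lemma Psi_lineDeriv_in (k R : ℝ) (x y v : EuclideanSpace ℝ (Fin 3)) (hy : y ≠ x)
    (h : ‖y - x‖ < R) :
    lineDeriv ℝ (fun y : EuclideanSpace ℝ (Fin 3) => prof k (min ‖y - x‖ R)) y v =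
      prof' k ‖y - x‖ * (inner ℝ (y - x) v / ‖y - x‖) := by
  have hn : ‖y - x‖ ≠ 0 := by simpa [sub_eq_zero] using hy
  have hc : HasDerivAt (fun t : ℝ => y + t • v - x) v 0 := by
    have := (((hasDerivAt_id (0:ℝ)).smul_const v).const_add y).sub_const x
    simpa using this
  have hnorm : HasDerivAt (fun t : ℝ => ‖y + t • v - x‖) (inner ℝ (y - x) v / ‖y - x‖) 0 := by
    have h2 := (hc.norm_sq).sqrt (by simpa [sub_eq_zero] using hy)
    simp only [Real.sqrt_sq (norm_nonneg _)] at h2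
    convert! h2 using 1
    simp only [zero_smul, add_zero]
    ring
  have hp : HasDerivAt (prof k) (prof' k ‖y - x‖) (‖y + (0:ℝ) • v - x‖) := by
    simpa using prof_hasDerivAt k _ hn
  have hcomp := hp.comp (0:ℝ) hnorm
  have hcomp' : HasLineDerivAt ℝ (fun y : EuclideanSpace ℝ (Fin 3) => prof k (min ‖y - x‖ R))
      (prof' k ‖y - x‖ * (inner ℝ (y - x) v / ‖y - x‖)) y v := by
    refine HasDerivAt.congr_of_eventuallyEq hcomp ?_
    have : ∀ᶠ t : ℝ in nhds 0, ‖y + t • v - x‖ < R :=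
      hnorm.continuousAt.eventually_lt continuousAt_const (by simpa using h)
    filter_upwards [this] with t ht
    simp [min_eq_left ht.le]
  exact hcomp'.lineDeriv

lemma Psi_lineDeriv_out (k R : ℝ) (x y v : EuclideanSpace ℝ (Fin 3)) 
    (h : R < ‖y - x‖) :
    lineDeriv ℝ (fun y : EuclideanSpace ℝ (Fin 3) => prof k (min ‖y - x‖ R)) y v = 0 := by
  have hcomp' : HasLineDerivAt ℝ (fun y : EuclideanSpace ℝ (Fin 3) => prof k (min ‖y - x‖ R))
      0 y v := by
    refine HasDerivAt.congr_of_eventuallyEq (hasDerivAt_const (0:ℝ) (prof k R)) ?_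
    have hc : Continuous (fun t : ℝ => ‖y + t • v - x‖) := by fun_prop
    have : ∀ᶠ t : ℝ in nhds 0, R < ‖y + t • v - x‖ :=
      continuousAt_const.eventually_lt hc.continuousAt (by simpa using h)
    filter_upwards [this] with t ht
    simp [min_eq_right ht.le]
  exact hcomp'.lineDeriv

lemma radial_zero (k R : ℝ) (hk : 0 < k) (hR : R = 2 * π / k) (x : EuclideanSpace ℝ (Fin 3))
    (Φ : EuclideanSpace ℝ (Fin 3) → ℝ) (hΦ : ContDiff ℝ 2 Φ) :
    ∫ y in Metric.closedBall x R, (prof' k ‖y - x‖ * (fderiv ℝ Φ y (y - x) / ‖y - x‖) +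
      k ^ 2 * Real.cos (k * ‖y - x‖) / ‖y - x‖ * Φ y) = 0 := by
  have hRpos : 0 < R := by rw [hR]; positivity
  have hkR : k * R = 2 * π := by rw [hR]; field_simp
  rw [← integral_indicator Metric.isClosed_closedBall.measurableSet,
    ← integral_add_left_eq_self _ x]
  apply polar_zero
  intro σ hσ
  set w : ℝ → ℝ := fun ρ => (k * ρ * Real.sin (k * ρ) - (1 - Real.cos (k * ρ))) * Φ (x + ρ • σ) with hw
  set w' : ℝ → ℝ := fun ρ => (k ^ 2 * ρ * Real.cos (k * ρ)) * Φ (x + ρ • σ) +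
    (k * ρ * Real.sin (k * ρ) - (1 - Real.cos (k * ρ))) * fderiv ℝ Φ (x + ρ • σ) σ with hw'
  have hd : ∀ ρ, HasDerivAt w (w' ρ) ρ := by
    intro ρ
    have h1 : HasDerivAt (fun ρ : ℝ => k * ρ) k ρ := by
      simpa using (hasDerivAt_id ρ).const_mul k
    have h2 : HasDerivAt (fun ρ : ℝ => x + ρ • σ) σ ρ := by
      simpa using ((hasDerivAt_id ρ).smul_const σ).const_add x
    have h3 : HasDerivAt (fun ρ : ℝ => Φ (x + ρ • σ)) (fderiv ℝ Φ (x + ρ • σ) σ) ρ :=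
      ((hΦ.differentiable (by norm_num)) _).hasFDerivAt.comp_hasDerivAt ρ h2
    have := ((h1.mul h1.sin).sub (h1.cos.const_sub 1)).mul h3
    convert! this using 1
    simp only [hw', Pi.mul_apply, Pi.sub_apply]
    ring
  have hc : Continuous w' := by
    have h1 : Continuous Φ := hΦ.continuous
    have h2 : Continuous (fderiv ℝ Φ) := hΦ.continuous_fderiv (by norm_num)
    have h3 : Continuous fun ρ : ℝ => x + ρ • σ := by fun_prop
    have h4 : Continuous fun ρ : ℝ => fderiv ℝ Φ (x + ρ • σ) σ :=
      (h2.comp h3).clm_apply continuous_const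
    have h5 : Continuous fun ρ : ℝ => Φ (x + ρ • σ) := h1.comp h3
    simp only [hw']
    fun_prop
  have hint := intervalIntegral.integral_eq_sub_of_hasDerivAt (a := 0) (b := R)
    (fun ρ _ => hd ρ) (hc.intervalIntegrable _ _)
  have hwR : w R = 0 := by simp [hw, hkR]
  have hw0 : w 0 = 0 := by simp [hw]
  rw [hwR, hw0, sub_zero, intervalIntegral.integral_of_le hRpos.le] at hint
  have hset : Set.Ioc (0:ℝ) R = Set.Ioi 0 ∩ Set.Iic R := by ext; simp
  rw [hset, ← setIntegral_indicator (measurableSet_Iic (a := R))] at hint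
  refine Eq.trans ?_ hint
  refine setIntegral_congr_fun (measurableSet_Ioi (a := (0:ℝ))) fun ρ hρ => ?_
  have hρ' : (0:ℝ) < ρ := hρ
  have hn : ‖ρ • σ‖ = ρ := by rw [norm_smul, hσ, mul_one, Real.norm_eq_abs, abs_of_pos hρ']
  beta_reduce
  by_cases hle : ρ ≤ R
  · rw [Set.indicator_of_mem (by simpa [hn] using hle), Set.indicator_of_mem (by simpa using hle)]
    simp only [add_sub_cancel_left, hn, map_smul, smul_eq_mul, prof', hw']
    field_simp
    ring
  · rw [Set.indicator_of_notMem (by simpa [hn] using hle), Set.indicator_of_notMem (by simpa using hle)]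
    simp

lemma ibp (k R : ℝ) (hk : 0 < k) (hR : R = 2 * π / k) (x : EuclideanSpace ℝ (Fin 3))
    (Φ : EuclideanSpace ℝ (Fin 3) → ℝ) (hΦ : ContDiff ℝ 2 Φ) (hs : HasCompactSupport Φ)
    (heig : ∀ y ∈ Metric.closedBall x R, euclidLaplacian Φ y = -k ^ 2 * Φ y) :
    IntegrableOn (fun y => prof' k ‖y - x‖ * (fderiv ℝ Φ y (y - x) / ‖y - x‖))
      (Metric.closedBall x R) ∧
    ∫ y in Metric.closedBall x R, prof' k ‖y - x‖ * (fderiv ℝ Φ y (y - x) / ‖y - x‖) =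
    ∫ y in Metric.closedBall x R, k ^ 2 * prof k ‖y - x‖ * Φ y := by
  have hRpos : 0 < R := by rw [hR]; positivity
  have hkR : k * R = 2 * π := by rw [hR]; field_simp
  set Ψ := fun y : EuclideanSpace ℝ (Fin 3) => prof k (min ‖y - x‖ R) with hΨ
  obtain ⟨C, hC⟩ := Psi_lip k R hk hRpos.le x
  set e : Fin 3 → EuclideanSpace ℝ (Fin 3) := fun i => EuclideanSpace.single i 1 with he
  set F : Fin 3 → EuclideanSpace ℝ (Fin 3) → ℝ := fun i y => fderiv ℝ Φ y (e i) with hF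
  have hFc : ∀ i, ContDiff ℝ 1 (F i) := fun i =>
    (hΦ.fderiv_right (m := 1) (by norm_num)).clm_apply contDiff_const
  have hFs : ∀ i, HasCompactSupport (F i) := fun i => hs.fderiv_apply ℝ (e i)
  have hFd : ∀ i y, lineDeriv ℝ (F i) y (-(e i)) = - fderiv ℝ (F i) y (e i) := fun i y => by
    rw [((hFc i).differentiable (by norm_num) y).lineDeriv_eq_fderiv, map_neg]
  have hint1 : ∀ i, Integrable (fun y => lineDeriv ℝ Ψ y (e i) * F i y) := fun i =>
    Integrable.bdd_mul ((hFc i).continuous.integrable_of_hasCompactSupport (hFs i))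
      (measurable_lineDeriv hC.continuous).aestronglyMeasurable
      (Filter.Eventually.of_forall fun y => norm_lineDeriv_le_of_lipschitz ℝ hC)
  have hint2 : ∀ i, Integrable (fun y => lineDeriv ℝ (F i) y (-(e i)) * Ψ y) := fun i => by
    simp only [hFd]
    refine Continuous.integrable_of_hasCompactSupport ?_ ?_
    · exact ((((hFc i).continuous_fderiv (by norm_num)).clm_apply continuous_const).neg).mul hC.continuous
    · exact (((hFs i).fderiv_apply ℝ (e i)).neg).mul_right
  have hparts : ∫ y, ∑ i, lineDeriv ℝ Ψ y (e i) * F i y =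
      ∫ y, ∑ i, lineDeriv ℝ (F i) y (-(e i)) * Ψ y := by
    rw [integral_finsetSum _ fun i _ => hint1 i, integral_finsetSum _ fun i _ => hint2 i]
    refine Finset.sum_congr rfl fun i _ => ?_
    obtain ⟨D, hD⟩ := ContDiff.lipschitzWith_of_hasCompactSupport (hFs i) (hFc i) (by norm_num)
    exact hC.integral_lineDeriv_mul_eq hD (hFs i) (e i)
  have hintS : Integrable (fun y => ∑ i, lineDeriv ℝ Ψ y (e i) * F i y) :=
    integrable_finsetSum _ fun i _ => hint1 i
  have hae : (fun y => ∑ i, lineDeriv ℝ Ψ y (e i) * F i y) =ᵐ[volume]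
      (Metric.closedBall x R).indicator
        (fun y => prof' k ‖y - x‖ * (fderiv ℝ Φ y (y - x) / ‖y - x‖)) := by
    have hsph : ∀ᵐ y : EuclideanSpace ℝ (Fin 3), y ∉ Metric.sphere x R :=
      measure_eq_zero_iff_ae_notMem.1 (Measure.addHaar_sphere volume x R)
    have hpt : ∀ᵐ y : EuclideanSpace ℝ (Fin 3), y ∉ ({x} : Set _) :=
      measure_eq_zero_iff_ae_notMem.1 (measure_singleton x)
    filter_upwards [hsph, hpt] with y h1 h2
    have h2' : y ≠ x := by simpa using h2
    have h1' : ‖y - x‖ ≠ R := by simpa [dist_eq_norm] using h1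
    rcases lt_or_gt_of_ne h1' with h | h
    · rw [Set.indicator_of_mem (by simpa [dist_eq_norm] using h.le)]
      have hsum : fderiv ℝ Φ y (y - x) = ∑ i, (y - x) i * F i y := by
        have : y - x = ∑ i, (y - x) i • e i := by
          ext j
          simp [he, Finset.sum_apply, Pi.single_apply]
        conv_lhs => rw [this]
        simp only [map_sum, map_smul, smul_eq_mul, hF]
      simp only [hΨ, Psi_lineDeriv_in k R x y _ h2' h]
      rw [hsum, Finset.sum_div, Finset.mul_sum]
      refine Finset.sum_congr rfl fun i _ => ?_
      have : inner ℝ (y - x) (e i) = (y - x) i := by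
        simp [he, EuclideanSpace.inner_single_right]
      rw [this]
      ring
    · rw [Set.indicator_of_notMem (by simpa [dist_eq_norm] using h)]
      simp only [hΨ, Psi_lineDeriv_out k R x y _ h]
      simp
  have hR2 : (fun y => ∑ i, lineDeriv ℝ (F i) y (-(e i)) * Ψ y) =
      (Metric.closedBall x R).indicator (fun y => k ^ 2 * prof k ‖y - x‖ * Φ y) := by
    ext y
    simp only [hFd]
    by_cases h : ‖y - x‖ ≤ R
    · have hm : y ∈ Metric.closedBall x R := by simpa [dist_eq_norm] using h
      rw [Set.indicator_of_mem hm]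
      have := heig y hm
      simp only [euclidLaplacian] at this
      rw [← Finset.sum_mul, Finset.sum_neg_distrib]
      simp only [hF, he, this, hΨ, min_eq_left h]
      ring
    · rw [Set.indicator_of_notMem (by simpa [dist_eq_norm] using h)]
      simp [hΨ, min_eq_right (not_le.1 h).le, prof, hkR]
  refine ⟨?_, ?_⟩
  · rw [← integrable_indicator_iff Metric.isClosed_closedBall.measurableSet]
    exact hintS.congr hae
  · rw [← integral_indicator Metric.isClosed_closedBall.measurableSet,
      ← integral_indicator Metric.isClosed_closedBall.measurableSet, ← hR2, ← hparts]
    exact integral_congr_ae hae.symm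

lemma coulomb_aux (k R : ℝ) (hk : 0 < k) (hR : R = 2 * π / k) (x : EuclideanSpace ℝ (Fin 3))
    (Φ : EuclideanSpace ℝ (Fin 3) → ℝ) (hΦ : ContDiff ℝ 2 Φ) (hs : HasCompactSupport Φ)
    (heig : ∀ y ∈ Metric.closedBall x R, euclidLaplacian Φ y = -k ^ 2 * Φ y) :
    ∫ y in Metric.closedBall x R, Φ y / ‖y - x‖ = 0 := by
  by_cases hi : IntegrableOn (fun y => Φ y / ‖y - x‖) (Metric.closedBall x R)
  swap
  · exact integral_undef hi
  obtain ⟨h1, h2⟩ := ibp k R hk hR x Φ hΦ hs heig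
  have h3 := radial_zero k R hk hR x Φ hΦ
  have hcos : IntegrableOn (fun y => k ^ 2 * Real.cos (k * ‖y - x‖) / ‖y - x‖ * Φ y)
      (Metric.closedBall x R) := by
    have : IntegrableOn (fun y => (k ^ 2 * Real.cos (k * ‖y - x‖)) * (Φ y / ‖y - x‖))
        (Metric.closedBall x R) := by
      refine Integrable.bdd_mul (c := k ^ 2) hi ?_ ?_
      · exact Continuous.aestronglyMeasurable (by fun_prop)
      · refine Filter.Eventually.of_forall fun y => ?_
        rw [Real.norm_eq_abs, abs_mul, abs_of_pos (by positivity : 0 < k ^ 2)]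
        exact mul_le_of_le_one_right (by positivity) (Real.abs_cos_le_one _)
    refine this.congr (Filter.Eventually.of_forall fun y => ?_)
    beta_reduce
    ring
  rw [integral_add h1 hcos, h2] at h3
  have hprof : (fun y => k ^ 2 * prof k ‖y - x‖ * Φ y) =
      fun y => k ^ 2 * (Φ y / ‖y - x‖) - k ^ 2 * Real.cos (k * ‖y - x‖) / ‖y - x‖ * Φ y := by
    ext y
    simp only [prof]
    ring
  rw [hprof, integral_sub (hi.const_mul _) hcos, sub_add_cancel, integral_const_mul] at h3
  exact (mul_eq_zero.1 h3).resolve_left (by positivity)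

/-- If `−Δφ = λφ` on a neighborhood of the closed ball of radius `r = 2π/√λ` around
`x ∈ ℝ³`, then the positive and negative mass of `φ` on that ball balance exactly
against the Coulomb kernel: `∫_{‖x−y‖ ≤ 2πλ^{-1/2}} φ(y)/‖y−x‖ dy = 0`. -/
theorem eigenfunction_coulomb_balance (lam : ℝ) (hlam : 0 < lam)
    (x : EuclideanSpace ℝ (Fin 3)) (r : ℝ) (hr : r = 2 * π / Real.sqrt lam)
    (U : Set (EuclideanSpace ℝ (Fin 3))) (hU : IsOpen U) (hBU : Metric.closedBall x r ⊆ U)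
    (φ : EuclideanSpace ℝ (Fin 3) → ℝ) (hφ : ContDiffOn ℝ (⊤ : ℕ∞) φ U)
    (heig : ∀ y ∈ U, euclidLaplacian φ y = -lam * φ y) :
    ∫ y in Metric.closedBall x r, φ y / ‖y - x‖ = 0 := by
  have hrpos : 0 < r := by rw [hr]; positivity
  obtain ⟨δ, hδ, hδU⟩ := (isCompact_closedBall x r).exists_cthickening_subset_open hU hBU
  rw [cthickening_closedBall hδ.le hrpos.le] at hδU
  let χ : ContDiffBump x := ⟨r + δ / 2, δ + r, by positivity, by linarith⟩
  have hsub : tsupport χ ⊆ U := by rw [χ.tsupport_eq]; exact hδU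
  set Φ : EuclideanSpace ℝ (Fin 3) → ℝ := fun y => χ y * φ y with hΦ
  have hΦs : HasCompactSupport Φ := χ.hasCompactSupport.mul_right
  have hΦc : ContDiff ℝ 2 Φ := by
    rw [contDiff_iff_contDiffAt]
    intro y
    by_cases hy : y ∈ tsupport χ
    · have h1 : ContDiffAt ℝ 2 φ y :=
        (hφ.contDiffAt (hU.mem_nhds (hsub hy))).of_le (WithTop.coe_le_coe.2 (le_top : (2 : ℕ∞) ≤ ⊤))
      exact χ.contDiff.contDiffAt.mul h1
    · have : Φ =ᶠ[nhds y] fun _ => 0 := by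
        filter_upwards [notMem_tsupport_iff_eventuallyEq.1 hy] with z hz
        simp [hΦ, hz]
      exact contDiffAt_const.congr_of_eventuallyEq this
  have hball : ∀ y ∈ Metric.ball x (r + δ / 2), Φ y = φ y := fun y hy => by
    simp only [hΦ]
    rw [χ.one_of_mem_closedBall (Metric.ball_subset_closedBall hy), one_mul]
  have hcb : Metric.closedBall x r ⊆ Metric.ball x (r + δ / 2) :=
    Metric.closedBall_subset_ball (by linarith)
  have hlap : ∀ y ∈ Metric.closedBall x r, euclidLaplacian Φ y = -(Real.sqrt lam) ^ 2 * Φ y := by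
    intro y hy
    have hev : Φ =ᶠ[nhds y] φ :=
      Filter.eventuallyEq_of_mem (Metric.isOpen_ball.mem_nhds (hcb hy)) hball
    rw [hball y (hcb hy), Real.sq_sqrt hlam.le, ← heig y (hBU hy)]
    unfold euclidLaplacian
    refine Finset.sum_congr rfl fun i _ => ?_
    have : (fun z => fderiv ℝ Φ z (EuclideanSpace.single i 1)) =ᶠ[nhds y]
        fun z => fderiv ℝ φ z (EuclideanSpace.single i 1) := by
      filter_upwards [hev.fderiv (𝕜 := ℝ)] with z hz
      rw [hz]
    rw [this.fderiv_eq]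
  have := coulomb_aux (Real.sqrt lam) r (Real.sqrt_pos.2 hlam) hr x Φ hΦc hΦs hlap
  rw [← this]
  refine setIntegral_congr_fun Metric.isClosed_closedBall.measurableSet fun y hy => ?_
  beta_reduce
  rw [hball y (hcb hy)]
end

section
/- (Kozma–Oravecz) Let d ≥ 1 and let S ⊂ ℤ^d \ {0} be a finite symmetric set (S = -S), and let a : S → ℂ satisfy a_{-k} = conj(a_k), so that the trigonometric polynomial f(x) = Σ_{k ∈ S} a_k · exp(2πi⟨k, x⟩) defines a real-valued function on the torus 𝕋^d = ℝ^d/ℤ^d with mean value 0. Then f has a zero in every closed ball (torus metric) of radius r = (1/4) · Σ_{k ∈ S} 1/‖k‖. -/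
open scoped Real

/-- The quotient (torus) distance on `ℝ^d / ℤ^d`, computed between lifts:
the infimum of Euclidean distances between `x` and all `ℤ^d`-translates of `y`. -/
noncomputable def torusDist {d : ℕ} (x y : EuclideanSpace ℝ (Fin d)) : ℝ :=
  ⨅ m : Fin d → ℤ, dist x (y + (WithLp.equiv 2 (Fin d → ℝ)).symm fun i => (m i : ℝ))

noncomputable def koE {d : ℕ} (k : Fin d → ℤ) (x : EuclideanSpace ℝ (Fin d)) : ℂ :=
  Complex.exp (2 * (π : ℂ) * Complex.I * ∑ i, (k i : ℂ) * (x i : ℂ))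

theorem koE_add {d : ℕ} (k : Fin d → ℤ) (x y : EuclideanSpace ℝ (Fin d)) :
    koE k (x + y) = koE k x * koE k y := by
  unfold koE
  rw [← Complex.exp_add, ← mul_add, ← Finset.sum_add_distrib]
  congr 2
  refine Finset.sum_congr rfl fun i _ => ?_
  simp only [PiLp.add_apply]
  push_cast
  ring

theorem koE_conj {d : ℕ} (k : Fin d → ℤ) (x : EuclideanSpace ℝ (Fin d)) :
    starRingEnd ℂ (koE k x) = koE (-k) x := by
  unfold koE
  rw [← Complex.exp_conj]
  have h2 : (starRingEnd ℂ) (2 : ℂ) = 2 := Complex.conj_ofNat 2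
  simp [map_sum, Finset.sum_neg_distrib, h2]

theorem koE_shift {d : ℕ} (k : Fin d → ℤ) (hk : k ≠ 0) :
    ∃ v : EuclideanSpace ℝ (Fin d),
      ‖v‖ = (1 / 4) * (1 / Real.sqrt (∑ i, (k i : ℝ) ^ 2)) ∧ koE k v + koE k (-v) = 0 := by
  have hpos : 0 < ∑ i, (k i : ℝ) ^ 2 := by
    obtain ⟨i, hi⟩ := Function.ne_iff.mp hk
    refine Finset.sum_pos' (fun i _ => sq_nonneg _) ⟨i, Finset.mem_univ _, ?_⟩
    have : (k i : ℝ) ≠ 0 := by exact_mod_cast hi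
    positivity
  set N := ∑ i, (k i : ℝ) ^ 2 with hN
  refine ⟨(1 / (4 * N)) • WithLp.toLp 2 (fun i => (k i : ℝ)), ?_, ?_⟩
  · rw [norm_smul, EuclideanSpace.norm_eq]
    simp only [Real.norm_eq_abs, sq_abs]
    rw [← hN, abs_of_pos (by positivity)]
    have h1 : Real.sqrt N ≠ 0 := (Real.sqrt_pos.mpr hpos).ne'
    have h2 : Real.sqrt N * Real.sqrt N = N := Real.mul_self_sqrt hpos.le
    field_simp
    nlinarith
  · have hs : ∑ i, (k i : ℂ) * ((((1 / (4 * N)) • WithLp.toLp 2 (fun i => (k i : ℝ)) :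
        EuclideanSpace ℝ (Fin d)) i : ℝ) : ℂ) = 1 / 4 := by
      have : ∑ i, (k i : ℝ) * ((1 / (4 * N)) * (k i : ℝ)) = 1 / 4 := by
        have : ∀ i, (k i : ℝ) * ((1 / (4 * N)) * (k i : ℝ)) = (1 / (4 * N)) * (k i : ℝ) ^ 2 :=
          fun i => by ring
        simp_rw [this]
        rw [← Finset.mul_sum, ← hN]
        field_simp
      have h2 := congrArg (fun t : ℝ => (t : ℂ)) this
      simp only [PiLp.smul_apply, smul_eq_mul]
      push_cast at h2 ⊢
      exact h2
    unfold koE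
    simp only [PiLp.neg_apply, Complex.ofReal_neg, mul_neg, Finset.sum_neg_distrib]
    rw [hs]
    have e1 : 2 * (π : ℂ) * Complex.I * (1 / 4) = π / 2 * Complex.I := by ring
    rw [e1, Complex.exp_neg, Complex.exp_pi_div_two_mul_I]
    simp

theorem ko_neg {d : ℕ} (T : Finset (Fin d → ℤ)) : (0 : Fin d → ℤ) ∉ T →
    ∀ (a : (Fin d → ℤ) → ℂ) (x₀ : EuclideanSpace ℝ (Fin d)),
    ∃ y, dist y x₀ ≤ (1 / 4) * ∑ k ∈ T, 1 / Real.sqrt (∑ i, (k i : ℝ) ^ 2) ∧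
      (∑ k ∈ T, a k * koE k y).re ≤ 0 := by
  classical
  induction T using Finset.induction_on with
  | empty => intro _ a x₀; exact ⟨x₀, by simp⟩
  | insert k T hkT ih =>
    intro h0 a x₀
    rw [Finset.mem_insert, not_or] at h0
    obtain ⟨v, hv, hkv⟩ := koE_shift k (Ne.symm h0.1)
    obtain ⟨y, hy, hre⟩ := ih h0.2 (fun j => a j * (koE j v + koE j (-v))) x₀
    have key : (∑ j ∈ insert k T, a j * koE j (y + v)) + ∑ j ∈ insert k T, a j * koE j (y + -v)
        = ∑ j ∈ T, a j * (koE j v + koE j (-v)) * koE j y := by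
      rw [← Finset.sum_add_distrib, Finset.sum_insert hkT]
      have : a k * koE k (y + v) + a k * koE k (y + -v) = 0 := by
        rw [koE_add, koE_add]
        linear_combination a k * koE k y * hkv
      rw [this, zero_add]
      refine Finset.sum_congr rfl fun j _ => ?_
      rw [koE_add, koE_add]
      ring
    have key2 := congrArg Complex.re key
    rw [Complex.add_re] at key2
    rw [Finset.sum_insert hkT, mul_add, ← hv]
    rcases le_total (∑ j ∈ insert k T, a j * koE j (y + v)).re 0 with h | h
    · refine ⟨y + v, ?_, h⟩
      calc dist (y + v) x₀ ≤ dist (y + v) y + dist y x₀ := dist_triangle _ _ _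
        _ ≤ _ := by simpa [dist_eq_norm] using hy
    · refine ⟨y + -v, ?_, by linarith⟩
      calc dist (y + -v) x₀ ≤ dist (y + -v) y + dist y x₀ := dist_triangle _ _ _
        _ ≤ _ := by simpa [dist_eq_norm] using hy

/-- **Kozma–Oravecz.** A real-valued, mean-zero trigonometric polynomial on `𝕋^d`
with frequency set `S` has a zero in every closed torus ball of radius
`(1/4) · Σ_{k ∈ S} 1/‖k‖`. -/
theorem kozma_oravecz {d : ℕ} (hd : 1 ≤ d)
    (S : Finset (Fin d → ℤ)) (hS0 : (0 : Fin d → ℤ) ∉ S)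
    (hSsym : ∀ k ∈ S, -k ∈ S)
    (a : (Fin d → ℤ) → ℂ) (ha : ∀ k ∈ S, a (-k) = starRingEnd ℂ (a k))
    (f : EuclideanSpace ℝ (Fin d) → ℂ)
    (hf : ∀ x, f x = ∑ k ∈ S, a k *
      Complex.exp (2 * (π : ℂ) * Complex.I * ∑ i, (k i : ℂ) * (x i : ℂ)))
    (x₀ : EuclideanSpace ℝ (Fin d)) :
    ∃ y : EuclideanSpace ℝ (Fin d),
      torusDist y x₀ ≤ (1 / 4) * ∑ k ∈ S, 1 / Real.sqrt (∑ i, (k i : ℝ) ^ 2) ∧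
      f y = 0 := by
  have hf' : ∀ x, f x = ∑ k ∈ S, a k * koE k x := hf
  set r := (1 / 4) * ∑ k ∈ S, 1 / Real.sqrt (∑ i, (k i : ℝ) ^ 2) with hr
  obtain ⟨y₁, hy₁, h₁⟩ := ko_neg S hS0 a x₀
  obtain ⟨y₂, hy₂, h₂⟩ := ko_neg S hS0 (fun k => - a k) x₀
  rw [← hf'] at h₁
  simp only [neg_mul, Finset.sum_neg_distrib, Complex.neg_re] at h₂
  rw [← hf'] at h₂
  have hcont : Continuous fun x => (f x).re := by
    have : f = fun x => ∑ k ∈ S, a k *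
      Complex.exp (2 * (π : ℂ) * Complex.I * ∑ i, (k i : ℂ) * (x i : ℂ)) := funext hf
    rw [this]
    fun_prop
  have him : ∀ x, (f x).im = 0 := by
    intro x
    rw [← Complex.conj_eq_iff_im, hf', map_sum]
    refine Finset.sum_nbij' (fun k => -k) (fun k => -k) hSsym hSsym ?_ ?_ ?_
    · intro k _; simp
    · intro k _; simp
    · intro k hk
      rw [map_mul, koE_conj, ha k hk]
  obtain ⟨y, hy, hy0⟩ := (convex_closedBall x₀ r).isPreconnected.intermediate_value
    (Metric.mem_closedBall.mpr hy₁) (Metric.mem_closedBall.mpr hy₂) hcont.continuousOn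
    (Set.mem_Icc.mpr ⟨h₁, by linarith⟩)
  refine ⟨y, le_trans ?_ (Metric.mem_closedBall.mp hy), Complex.ext hy0 (him y)⟩
  unfold torusDist
  refine (ciInf_le ⟨0, ?_⟩ (0 : Fin d → ℤ)).trans (le_of_eq ?_)
  · rintro _ ⟨m, rfl⟩
    exact dist_nonneg
  · congr 1
    ext i
    simp
end

section
/- Let λ > 0 and let φ : ℝ² → ℝ be a smooth function satisfying Δφ = −λφ on all of ℝ², where Δ is the Euclidean Laplacian. Then for every x ∈ ℝ² and every t ≥ 0, ∫₀^t ( (1/(2π)) ∫_{B(x, t−s)} φ(y)/√((t−s)² − ‖y−x‖²) dy ) ds = ((1 − cos(√λ · t))/λ) · φ(x), where the inner integral is over the open disk B(x, t−s) ⊂ ℝ². -/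
open scoped Real
open MeasureTheory

/-- Differentiation under the integral sign for jointly continuous data. -/
lemma duh_hasDerivAt_param (a b : ℝ) (f f' : ℝ → ℝ → ℝ)
    (hf : Continuous (Function.uncurry f)) (hf' : Continuous (Function.uncurry f'))
    (hd : ∀ r θ, HasDerivAt (fun r => f r θ) (f' r θ) r) (r : ℝ) :
    HasDerivAt (fun r => ∫ θ in a..b, f r θ) (∫ θ in a..b, f' r θ) r := by
  have hK : IsCompact (Metric.closedBall r 1 ×ˢ Set.uIcc a b) :=
    (isCompact_closedBall r 1).prod isCompact_uIcc
  obtain ⟨C, hC⟩ := hK.exists_bound_of_continuousOn hf'.continuousOn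
  have hfc : ∀ r, Continuous (f r) := fun r => by
    have := hf.comp (Continuous.prodMk_right r)
    exact this
  have hfc' : ∀ r, Continuous (f' r) := fun r => by
    have := hf'.comp (Continuous.prodMk_right r)
    exact this
  refine (intervalIntegral.hasDerivAt_integral_of_dominated_loc_of_deriv_le
    (bound := fun _ => C) (s := Metric.closedBall r 1)
    (Metric.closedBall_mem_nhds r one_pos) ?_ ?_ ?_ ?_ ?_ ?_).2
  · exact Filter.Eventually.of_forall fun r => (hfc r).aestronglyMeasurable
  · exact (hfc r).intervalIntegrable _ _
  · exact (hfc' r).aestronglyMeasurable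
  · refine Filter.Eventually.of_forall fun θ hθ s hs => ?_
    exact hC (s, θ) ⟨hs, Set.uIoc_subset_uIcc hθ⟩
  · exact intervalIntegrable_const
  · exact Filter.Eventually.of_forall fun θ _ s _ => hd s θ

lemma duh_continuous_param (a b : ℝ) (f : ℝ → ℝ → ℝ)
    (hf : Continuous (Function.uncurry f)) :
    Continuous (fun r => ∫ θ in a..b, f r θ) :=
  intervalIntegral.continuous_parametric_intervalIntegral_of_continuous' hf a b

/-- Uniqueness for the harmonic oscillator. -/
lemma duh_osc (lam c : ℝ) (hlam : 0 < lam) (u u' : ℝ → ℝ)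
    (hu : ∀ t, HasDerivAt u (u' t) t) (hu' : ∀ t, HasDerivAt u' (-lam * u t) t)
    (h0 : u 0 = 0) (h1 : u' 0 = c) (t : ℝ) :
    u t = c * (Real.sin (Real.sqrt lam * t) / Real.sqrt lam) := by
  set w := Real.sqrt lam with hw
  have hwp : 0 < w := Real.sqrt_pos.2 hlam
  have hw2 : w * w = lam := Real.mul_self_sqrt hlam.le
  have hlin : ∀ t, HasDerivAt (fun t : ℝ => w * t) w t := fun t => by
    simpa using (hasDerivAt_id t).const_mul w
  have hd : ∀ t, HasDerivAt (fun t => u t - c * (Real.sin (w * t) / w))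
      (u' t - c * Real.cos (w * t)) t := fun t => by
    refine (hu t).sub ?_
    have := (((hlin t).sin).div_const w).const_mul c
    refine this.congr_deriv ?_
    field_simp
  have hd' : ∀ t, HasDerivAt (fun t => u' t - c * Real.cos (w * t))
      (-lam * (u t - c * (Real.sin (w * t) / w))) t := fun t => by
    have := (hu' t).sub (((hlin t).cos).const_mul c)
    refine this.congr_deriv ?_
    rw [← hw2]; field_simp; ring
  have hE : ∀ t, HasDerivAt (fun t => (u' t - c * Real.cos (w * t)) ^ 2
      + lam * (u t - c * (Real.sin (w * t) / w)) ^ 2) 0 t := fun t => by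
    have := ((hd' t).pow 2).add (((hd t).pow 2).const_mul lam)
    refine this.congr_deriv ?_
    simp; ring
  have hc := is_const_of_deriv_eq_zero (fun t => (hE t).differentiableAt)
    (fun t => (hE t).deriv) t 0
  simp [h0, h1] at hc
  have h2 : (u t - c * (Real.sin (w * t) / w)) ^ 2 = 0 := by
    nlinarith [sq_nonneg (u' t - c * Real.cos (w * t)),
      sq_nonneg (u t - c * (Real.sin (w * t) / w))]
  have := pow_eq_zero_iff (two_ne_zero) |>.1 h2
  linarith

/-- From Darboux's equation to the oscillator equation. -/
lemma duh_descent (lam : ℝ) (hlam : 0 < lam) (M M' M'' : ℝ → ℝ)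
    (hM : ∀ r, HasDerivAt M (M' r) r) (hM' : ∀ r, HasDerivAt M' (M'' r) r)
    (hc : Continuous M'') (hode : ∀ r, r * M'' r + M' r + lam * r * M r = 0) (t : ℝ) :
    t * ∫ α in (0 : ℝ)..(π / 2), Real.sin α * M (t * Real.sin α)
      = M 0 * (Real.sin (Real.sqrt lam * t) / Real.sqrt lam) := by
  have cM : Continuous M := continuous_iff_continuousAt.2 fun r => (hM r).continuousAt
  have cM' : Continuous M' := continuous_iff_continuousAt.2 fun r => (hM' r).continuousAt
  have hl : ∀ r θ : ℝ, HasDerivAt (fun r : ℝ => r * Real.sin θ) (Real.sin θ) r := fun r θ => by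
    simpa using (hasDerivAt_id r).mul_const (Real.sin θ)
  have hG : ∀ t, HasDerivAt
      (fun t => ∫ α in (0 : ℝ)..(π / 2), Real.sin α * M (t * Real.sin α))
      (∫ α in (0 : ℝ)..(π / 2), Real.sin α * (M' (t * Real.sin α) * Real.sin α)) t := by
    intro t
    refine duh_hasDerivAt_param _ _ (fun t α => Real.sin α * M (t * Real.sin α))
      (fun t α => Real.sin α * (M' (t * Real.sin α) * Real.sin α)) ?_ ?_ ?_ t
    · simp only [Function.uncurry_def]; fun_prop
    · simp only [Function.uncurry_def]; fun_prop
    · intro r θ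
      exact ((hM _).comp r (hl r θ)).const_mul _
  have hG' : ∀ t, HasDerivAt
      (fun t => ∫ α in (0 : ℝ)..(π / 2), Real.sin α * (M' (t * Real.sin α) * Real.sin α))
      (∫ α in (0 : ℝ)..(π / 2),
        Real.sin α * (M'' (t * Real.sin α) * Real.sin α * Real.sin α)) t := by
    intro t
    refine duh_hasDerivAt_param _ _ (fun t α => Real.sin α * (M' (t * Real.sin α) * Real.sin α))
      (fun t α => Real.sin α * (M'' (t * Real.sin α) * Real.sin α * Real.sin α)) ?_ ?_ ?_ t
    · simp only [Function.uncurry_def]; fun_prop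
    · simp only [Function.uncurry_def]; fun_prop
    · intro r θ
      exact (((hM' _).comp r (hl r θ)).mul_const _).const_mul _
  have key : ∀ t, 2 * (∫ α in (0 : ℝ)..(π / 2), Real.sin α * (M' (t * Real.sin α) * Real.sin α))
      + t * (∫ α in (0 : ℝ)..(π / 2),
        Real.sin α * (M'' (t * Real.sin α) * Real.sin α * Real.sin α))
      + lam * (t * ∫ α in (0 : ℝ)..(π / 2), Real.sin α * M (t * Real.sin α)) = 0 := by
    intro t
    have hb : ∫ α in (0 : ℝ)..(π / 2),
        (2 * (Real.sin α * (M' (t * Real.sin α) * Real.sin α))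
        + t * (Real.sin α * (M'' (t * Real.sin α) * Real.sin α * Real.sin α))
        + lam * (t * (Real.sin α * M (t * Real.sin α)))) = 0 := by
      have hftc := intervalIntegral.integral_eq_sub_of_hasDerivAt (a := 0) (b := π / 2)
        (f := fun α => -(Real.sin α * Real.cos α * M' (t * Real.sin α)))
        (f' := fun α => (2 * (Real.sin α * (M' (t * Real.sin α) * Real.sin α))
        + t * (Real.sin α * (M'' (t * Real.sin α) * Real.sin α * Real.sin α))
        + lam * (t * (Real.sin α * M (t * Real.sin α))))) ?_ ?_
      · rw [hftc]; simp
      · intro α _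
        have h1 := (((Real.hasDerivAt_sin α).mul (Real.hasDerivAt_cos α)).mul
          ((hM' (t * Real.sin α)).comp α ((Real.hasDerivAt_sin α).const_mul t))).neg
        refine h1.congr_deriv ?_
        have := hode (t * Real.sin α)
        have h2 := Real.sin_sq_add_cos_sq α
        simp only [Function.comp]
        have h3 : Real.cos α * Real.cos α = 1 - Real.sin α * Real.sin α := by linarith
        have h4 : Real.sin α * Real.cos α * (M'' (t * Real.sin α) * (t * Real.cos α))
          = Real.sin α * (M'' (t * Real.sin α) * t) * (Real.cos α * Real.cos α) := by ring
        simp only [Pi.mul_apply]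
        rw [h4, h3]
        linear_combination -this
      · apply Continuous.intervalIntegrable; fun_prop
    rw [intervalIntegral.integral_add, intervalIntegral.integral_add,
      intervalIntegral.integral_const_mul, intervalIntegral.integral_const_mul,
      intervalIntegral.integral_const_mul, intervalIntegral.integral_const_mul] at hb
    · exact hb
    all_goals apply Continuous.intervalIntegrable; fun_prop
  refine duh_osc lam (M 0) hlam
    (fun t => t * ∫ α in (0 : ℝ)..(π / 2), Real.sin α * M (t * Real.sin α))
    (fun t => (∫ α in (0 : ℝ)..(π / 2), Real.sin α * M (t * Real.sin α)) +
      t * ∫ α in (0 : ℝ)..(π / 2), Real.sin α * (M' (t * Real.sin α) * Real.sin α))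
    ?_ ?_ ?_ ?_ t
  · intro t
    have := (hasDerivAt_id t).mul (hG t)
    refine this.congr_deriv ?_
    simp
  · intro t
    have := (hG t).add ((hasDerivAt_id t).mul (hG' t))
    refine this.congr_deriv ?_
    have := key t
    simp only [id]
    linarith
  · simp
  · simp

abbrev DuhE := EuclideanSpace ℝ (Fin 2)

noncomputable def duhE (θ : ℝ) : DuhE :=
  Real.cos θ • EuclideanSpace.single 0 1 + Real.sin θ • EuclideanSpace.single 1 1
noncomputable def duhE' (θ : ℝ) : DuhE :=
  (-Real.sin θ) • EuclideanSpace.single 0 1 + Real.cos θ • EuclideanSpace.single 1 1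

lemma duhE_deriv (θ : ℝ) : HasDerivAt duhE (duhE' θ) θ :=
  ((Real.hasDerivAt_cos θ).smul_const _).add ((Real.hasDerivAt_sin θ).smul_const _)

lemma duhE'_deriv (θ : ℝ) : HasDerivAt duhE' (-duhE θ) θ := by
  have := (((Real.hasDerivAt_sin θ).neg).smul_const (EuclideanSpace.single 0 1 : DuhE)).add
    ((Real.hasDerivAt_cos θ).smul_const (EuclideanSpace.single 1 1 : DuhE))
  refine this.congr_deriv ?_
  simp only [duhE]; module

@[fun_prop]
lemma duhE_cont : Continuous duhE := by unfold duhE; fun_prop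
@[fun_prop]
lemma duhE'_cont : Continuous duhE' := by unfold duhE'; fun_prop

lemma duh_norm (r θ : ℝ) (hr : 0 ≤ r) : ‖r • duhE θ‖ = r := by
  rw [norm_smul, Real.norm_of_nonneg hr, EuclideanSpace.norm_eq]
  simp [duhE, Fin.sum_univ_two]

/-- The mean over circles satisfies Darboux's equation. -/
lemma duh_mean (lam : ℝ) (φ : DuhE → ℝ) (hφ : ContDiff ℝ (⊤ : ℕ∞) φ)
    (heig : ∀ x, euclidLaplacian φ x = -lam * φ x) (x : DuhE) :
    ∃ M' M'' : ℝ → ℝ,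
      (∀ r, HasDerivAt (fun r => ∫ θ in (-π)..π, φ (x + r • duhE θ)) (M' r) r) ∧
      (∀ r, HasDerivAt M' (M'' r) r) ∧ Continuous M'' ∧
      (∀ r, r * M'' r + M' r + lam * r * (∫ θ in (-π)..π, φ (x + r • duhE θ)) = 0) := by
  have h1 : ContDiff ℝ (⊤ : ℕ∞) (fderiv ℝ φ) := hφ.fderiv_right (by simp)
  have h2 : ContDiff ℝ (⊤ : ℕ∞) (fderiv ℝ (fderiv ℝ φ)) := h1.fderiv_right (by simp)
  have c0 := hφ.continuous
  have c1 := h1.continuous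
  have c2 := h2.continuous
  have d0 : ∀ y, HasFDerivAt φ (fderiv ℝ φ y) y := fun y =>
    (hφ.differentiable (by simp) y).hasFDerivAt
  have d1 : ∀ y, HasFDerivAt (fderiv ℝ φ) (fderiv ℝ (fderiv ℝ φ) y) y := fun y =>
    (h1.differentiable (by simp) y).hasFDerivAt
  have hp : ∀ r θ, HasDerivAt (fun r : ℝ => x + r • duhE θ) (duhE θ) r := fun r θ => by
    simpa using ((hasDerivAt_id r).smul_const (duhE θ)).const_add x
  have hpθ : ∀ r θ : ℝ, HasDerivAt (fun θ : ℝ => x + r • duhE θ) (r • duhE' θ) θ := fun r θ =>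
    ((duhE_deriv θ).fun_const_smul r).const_add x
  have hlap : ∀ y θ, fderiv ℝ (fderiv ℝ φ) y (duhE θ) (duhE θ)
      + fderiv ℝ (fderiv ℝ φ) y (duhE' θ) (duhE' θ) = - lam * φ y := by
    intro y θ
    rw [← heig y]
    have hh : ∀ v : DuhE, fderiv ℝ (fun z => fderiv ℝ φ z v) y v
        = fderiv ℝ (fderiv ℝ φ) y v v := by
      intro v
      have := ((d1 y).clm_apply (hasFDerivAt_const v y)).fderiv
      rw [this]; simp
    simp only [euclidLaplacian, Fin.sum_univ_two, hh]
    simp only [duhE, duhE', map_add, map_smul, ContinuousLinearMap.add_apply,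
      ContinuousLinearMap.smul_apply, smul_eq_mul]
    have h2 := Real.sin_sq_add_cos_sq θ
    linear_combination (fderiv ℝ (fderiv ℝ φ) y (EuclideanSpace.single 0 1)
      (EuclideanSpace.single 0 1) + fderiv ℝ (fderiv ℝ φ) y (EuclideanSpace.single 1 1)
      (EuclideanSpace.single 1 1)) * h2
  refine ⟨fun r => ∫ θ in (-π)..π, fderiv ℝ φ (x + r • duhE θ) (duhE θ),
    fun r => ∫ θ in (-π)..π, fderiv ℝ (fderiv ℝ φ) (x + r • duhE θ) (duhE θ) (duhE θ),
    ?_, ?_, ?_, ?_⟩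
  · refine duh_hasDerivAt_param _ _ (fun r θ => φ (x + r • duhE θ))
      (fun r θ => fderiv ℝ φ (x + r • duhE θ) (duhE θ)) ?_ ?_ ?_
    · simp only [Function.uncurry_def]; fun_prop
    · simp only [Function.uncurry_def]; fun_prop
    · intro r θ
      exact (d0 _).comp_hasDerivAt r (hp r θ)
  · refine duh_hasDerivAt_param _ _ (fun r θ => fderiv ℝ φ (x + r • duhE θ) (duhE θ))
      (fun r θ => fderiv ℝ (fderiv ℝ φ) (x + r • duhE θ) (duhE θ) (duhE θ)) ?_ ?_ ?_
    · simp only [Function.uncurry_def]; fun_prop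
    · simp only [Function.uncurry_def]; fun_prop
    · intro r θ
      have := ((d1 _).comp_hasDerivAt r (hp r θ)).clm_apply (hasDerivAt_const r (duhE θ))
      simpa using this
  · refine duh_continuous_param _ _
      (fun r θ => fderiv ℝ (fderiv ℝ φ) (x + r • duhE θ) (duhE θ) (duhE θ)) ?_
    simp only [Function.uncurry_def]; fun_prop
  · intro r
    have hb : ∫ θ in (-π)..π,
        (r * fderiv ℝ (fderiv ℝ φ) (x + r • duhE θ) (duhE θ) (duhE θ)
          + fderiv ℝ φ (x + r • duhE θ) (duhE θ) + lam * r * φ (x + r • duhE θ)) = 0 := by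
      have hftc := intervalIntegral.integral_eq_sub_of_hasDerivAt (a := -π) (b := π)
        (f := fun θ => - fderiv ℝ φ (x + r • duhE θ) (duhE' θ))
        (f' := fun θ => (r * fderiv ℝ (fderiv ℝ φ) (x + r • duhE θ) (duhE θ) (duhE θ)
          + fderiv ℝ φ (x + r • duhE θ) (duhE θ) + lam * r * φ (x + r • duhE θ))) ?_ ?_
      · rw [hftc]; simp [duhE, duhE']
      · intro θ _
        have := (((d1 _).comp_hasDerivAt θ (hpθ r θ)).clm_apply (duhE'_deriv θ)).neg
        refine this.congr_deriv ?_
        simp only [Function.comp, map_smul, ContinuousLinearMap.smul_apply, map_neg, smul_eq_mul]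
        linear_combination -r * hlap (x + r • duhE θ) θ
      · apply Continuous.intervalIntegrable; fun_prop
    rw [intervalIntegral.integral_add, intervalIntegral.integral_add,
      intervalIntegral.integral_const_mul, intervalIntegral.integral_const_mul] at hb
    · exact hb
    all_goals apply Continuous.intervalIntegrable; fun_prop

lemma duh_polar_aux (g : DuhE → ℝ) :
    ∫ z, g z = ∫ p in Set.Ioi (0 : ℝ) ×ˢ Set.Ioo (-π) π, p.1 * g (p.1 • duhE p.2) := by
  have e1 := (PiLp.volume_preserving_toLp (Fin 2)).integral_comp
    (MeasurableEquiv.toLp 2 (Fin 2 → ℝ)).measurableEmbedding g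
  have e2 := ((volume_preserving_finTwoArrow ℝ).symm).integral_comp
    (MeasurableEquiv.finTwoArrow (α := ℝ)).symm.measurableEmbedding
    (fun v => g (WithLp.toLp 2 v))
  rw [← e1, ← e2, ← integral_comp_polarCoord_symm]
  rw [polarCoord_target]
  refine setIntegral_congr_fun (measurableSet_Ioi.prod measurableSet_Ioo) fun p _ => ?_
  simp only [smul_eq_mul]
  congr 2
  ext i
  fin_cases i <;> simp [duhE, polarCoord, MeasurableEquiv.finTwoArrow]

lemma duh_image (τ : ℝ) (hτ : 0 < τ) :
    (fun α => τ * Real.sin α) '' Set.Ioo 0 (π / 2) = Set.Ioo 0 τ := by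
  ext r
  constructor
  · rintro ⟨α, ⟨h0, h1⟩, rfl⟩
    have hs : 0 < Real.sin α := Real.sin_pos_of_pos_of_lt_pi h0 (by linarith [Real.pi_pos])
    have hs1 : Real.sin α < 1 := by
      rw [← Real.sin_pi_div_two]
      exact Real.sin_lt_sin_of_lt_of_le_pi_div_two (by linarith [Real.pi_pos]) le_rfl h1
    exact ⟨by positivity, by nlinarith⟩
  · rintro ⟨h0, h1⟩
    refine ⟨Real.arcsin (r / τ), ⟨Real.arcsin_pos.2 (by positivity),
      Real.arcsin_lt_pi_div_two.2 ((div_lt_one hτ).2 h1)⟩, ?_⟩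
    have : r / τ ≤ 1 := ((div_lt_one hτ).2 h1).le
    have h2 : 0 ≤ r / τ := by positivity
    simp only
    rw [Real.sin_arcsin (by linarith) this]
    field_simp

lemma duh_inj (τ : ℝ) (hτ : 0 < τ) :
    Set.InjOn (fun α => τ * Real.sin α) (Set.Ioo 0 (π / 2)) := by
  intro a ha b hb hab
  exact Real.injOn_sin ⟨by linarith [ha.1, Real.pi_pos], ha.2.le⟩
    ⟨by linarith [hb.1, Real.pi_pos], hb.2.le⟩ (mul_left_cancel₀ hτ.ne' hab)

lemma duh_jac (τ : ℝ) (hτ : 0 < τ) (α : ℝ) (hα : α ∈ Set.Ioo 0 (π / 2)) :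
    |τ * Real.cos α| * ((τ * Real.sin α) / Real.sqrt (τ ^ 2 - (τ * Real.sin α) ^ 2))
      = τ * Real.sin α := by
  have hc : 0 < Real.cos α :=
    Real.cos_pos_of_mem_Ioo ⟨by linarith [hα.1, Real.pi_pos], hα.2⟩
  have h1 : τ ^ 2 - (τ * Real.sin α) ^ 2 = (τ * Real.cos α) ^ 2 := by
    have := Real.sin_sq_add_cos_sq α
    linear_combination -τ ^ 2 * this
  rw [h1, Real.sqrt_sq (by positivity), abs_of_pos (by positivity)]
  field_simp

lemma duh_der (τ : ℝ) (s : Set ℝ) : ∀ α ∈ s,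
    HasDerivWithinAt (fun α => τ * Real.sin α) (τ * Real.cos α) s α := fun α _ =>
  ((Real.hasDerivAt_sin α).const_mul τ).hasDerivWithinAt

lemma duh_kernel_int (τ : ℝ) (hτ : 0 < τ) :
    IntegrableOn (fun r => r / Real.sqrt (τ ^ 2 - r ^ 2)) (Set.Ioo 0 τ) := by
  rw [← duh_image τ hτ, integrableOn_image_iff_integrableOn_abs_deriv_smul measurableSet_Ioo
    (duh_der τ _) (duh_inj τ hτ)]
  have : IntegrableOn (fun α => τ * Real.sin α) (Set.Ioo 0 (π / 2)) :=
    ((by fun_prop : Continuous fun α => τ * Real.sin α).integrableOn_Icc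
      (a := 0) (b := π / 2)).mono_set Set.Ioo_subset_Icc_self
  refine this.congr_fun (fun α hα => ?_) measurableSet_Ioo
  exact (duh_jac τ hτ α hα).symm

lemma duh_polar (φ : DuhE → ℝ) (hφ : Continuous φ) (x : DuhE) (τ : ℝ) (hτ : 0 < τ) :
    ∫ y in Metric.ball x τ, φ y / Real.sqrt (τ ^ 2 - ‖y - x‖ ^ 2)
      = τ * ∫ α in (0 : ℝ)..(π / 2), Real.sin α *
          ∫ θ in (-π)..π, φ (x + (τ * Real.sin α) • duhE θ) := by
  rw [← integral_indicator Metric.isOpen_ball.measurableSet,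
    ← integral_add_left_eq_self _ x, duh_polar_aux]
  have step1 : ∫ p in Set.Ioi (0 : ℝ) ×ˢ Set.Ioo (-π) π,
      p.1 * (Metric.ball x τ).indicator (fun y => φ y / Real.sqrt (τ ^ 2 - ‖y - x‖ ^ 2))
        (x + p.1 • duhE p.2)
      = ∫ p in Set.Ioo (0 : ℝ) τ ×ˢ Set.Ioo (-π) π,
        φ (x + p.1 • duhE p.2) * (p.1 / Real.sqrt (τ ^ 2 - p.1 ^ 2) * 1) := by
    rw [← integral_indicator (measurableSet_Ioi.prod measurableSet_Ioo),
      ← integral_indicator (measurableSet_Ioo.prod measurableSet_Ioo)]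
    congr 1
    ext ⟨r, θ⟩
    by_cases hr : 0 < r
    · by_cases hr2 : r < τ
      · by_cases hθ : θ ∈ Set.Ioo (-π) π
        · rw [Set.indicator_of_mem (by exact ⟨hr, hθ⟩), Set.indicator_of_mem,
            Set.indicator_of_mem (by exact ⟨⟨hr, hr2⟩, hθ⟩)]
          · simp only [add_sub_cancel_left, duh_norm r θ hr.le]; ring
          · simp [duh_norm r θ hr.le, hr2]
        · rw [Set.indicator_of_notMem (fun h => hθ h.2), Set.indicator_of_notMem (fun h => hθ h.2)]
      · rw [Set.indicator_of_notMem (s := Set.Ioo (0 : ℝ) τ ×ˢ Set.Ioo (-π) π)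
          (fun h => hr2 h.1.2)]
        have : x + r • duhE θ ∉ Metric.ball x τ := by simpa [duh_norm r θ hr.le] using hr2
        refine Set.indicator_apply_eq_zero.2 fun _ => ?_
        simp only
        rw [Set.indicator_of_notMem this, mul_zero]
    · rw [Set.indicator_of_notMem (fun h => hr h.1), Set.indicator_of_notMem (fun h => hr h.1.1)]
  rw [step1]
  have hint : IntegrableOn (fun p : ℝ × ℝ =>
      φ (x + p.1 • duhE p.2) * (p.1 / Real.sqrt (τ ^ 2 - p.1 ^ 2) * 1))
      (Set.Ioo (0 : ℝ) τ ×ˢ Set.Ioo (-π) π) (volume.prod volume) := by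
    obtain ⟨C, hC⟩ := (isCompact_closedBall x τ).exists_bound_of_continuousOn hφ.continuousOn
    have hk : Integrable (fun p : ℝ × ℝ => p.1 / Real.sqrt (τ ^ 2 - p.1 ^ 2) * 1)
        ((volume.prod volume).restrict (Set.Ioo (0 : ℝ) τ ×ˢ Set.Ioo (-π) π)) := by
      rw [← Measure.prod_restrict]
      exact Integrable.mul_prod (duh_kernel_int τ hτ)
        (integrable_const (μ := volume.restrict (Set.Ioo (-π) π)) (1 : ℝ))
    refine hk.bdd_mul (c := C) ?_ ?_
    · exact (by fun_prop : Continuous fun p : ℝ × ℝ => φ (x + p.1 • duhE p.2)).aestronglyMeasurable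
    · refine ae_restrict_of_forall_mem (measurableSet_Ioo.prod measurableSet_Ioo) ?_
      rintro ⟨r, θ⟩ ⟨h1, h2⟩
      apply hC
      simp [duh_norm r θ h1.1.le, h1.2.le]
  rw [Measure.volume_eq_prod, setIntegral_prod _ hint]
  simp only [mul_one, integral_mul_const]
  rw [← duh_image τ hτ, integral_image_eq_integral_abs_deriv_smul measurableSet_Ioo
    (duh_der τ _) (duh_inj τ hτ), intervalIntegral.integral_of_le (by positivity),
    ← integral_Ioc_eq_integral_Ioo, ← integral_const_mul,
    integral_Ioc_eq_integral_Ioo, integral_Ioc_eq_integral_Ioo]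
  refine setIntegral_congr_fun measurableSet_Ioo fun α hα => ?_
  have hj := duh_jac τ hτ α hα
  simp only [smul_eq_mul]
  rw [intervalIntegral.integral_of_le (by linarith [Real.pi_pos]), integral_Ioc_eq_integral_Ioo]
  linear_combination (∫ θ in Set.Ioo (-π) π, φ (x + (τ * Real.sin α) • duhE θ)) * hj

/-- For a smooth global eigenfunction `−Δφ = λφ` on `ℝ²`, Duhamel's solution formula
for the inhomogeneous wave equation `u_tt − Δu = φ` with vanishing initial data
evaluates to `((1 − cos(√λ·t))/λ)·φ(x)`. -/
theorem duhamel_formula_2d (lam : ℝ) (hlam : 0 < lam)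
    (φ : EuclideanSpace ℝ (Fin 2) → ℝ) (hφ : ContDiff ℝ (⊤ : ℕ∞) φ)
    (heig : ∀ x, euclidLaplacian φ x = -lam * φ x)
    (x : EuclideanSpace ℝ (Fin 2)) (t : ℝ) (ht : 0 ≤ t) :
    ∫ s in (0 : ℝ)..t, (1 / (2 * π)) *
        ∫ y in Metric.ball x (t - s), φ y / Real.sqrt ((t - s) ^ 2 - ‖y - x‖ ^ 2) =
      ((1 - Real.cos (Real.sqrt lam * t)) / lam) * φ x := by
  set w := Real.sqrt lam with hw
  have hwp : 0 < w := Real.sqrt_pos.2 hlam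
  have hw2 : w * w = lam := Real.mul_self_sqrt hlam.le
  obtain ⟨M', M'', hM, hM', hc, hode⟩ := duh_mean lam φ hφ heig x
  have hM0 : ∫ θ in (-π)..π, φ (x + (0 : ℝ) • duhE θ) = 2 * π * φ x := by
    simp; left; ring
  have hinner : ∀ τ, 0 ≤ τ → (1 / (2 * π)) *
      ∫ y in Metric.ball x τ, φ y / Real.sqrt (τ ^ 2 - ‖y - x‖ ^ 2)
        = φ x * (Real.sin (w * τ) / w) := by
    intro τ hτ
    rcases hτ.eq_or_lt with rfl | hτ
    · simp
    · rw [duh_polar φ hφ.continuous x τ hτ, duh_descent lam hlam _ M' M'' hM hM' hc hode τ, hM0, ← hw]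
      have := Real.pi_pos
      field_simp
  rw [intervalIntegral.integral_comp_sub_left (fun τ => (1 / (2 * π)) *
      ∫ y in Metric.ball x τ, φ y / Real.sqrt (τ ^ 2 - ‖y - x‖ ^ 2)) t]
  rw [sub_self, sub_zero]
  rw [intervalIntegral.integral_congr (g := fun τ => φ x * (Real.sin (w * τ) / w))
    (fun τ hτ => hinner τ (by rw [Set.uIcc_of_le ht] at hτ; exact hτ.1))]
  have hftc := intervalIntegral.integral_eq_sub_of_hasDerivAt (a := 0) (b := t)
    (f := fun τ => φ x * (-Real.cos (w * τ) / lam))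
    (f' := fun τ => φ x * (Real.sin (w * τ) / w)) ?_ ?_
  · rw [hftc]; simp; ring
  · intro τ _
    have hlin : HasDerivAt (fun t : ℝ => w * t) w τ := by
      simpa using (hasDerivAt_id τ).const_mul w
    refine (((hlin.cos.neg).div_const lam).const_mul (φ x)).congr_deriv ?_
    rw [← hw2]; field_simp
  · apply Continuous.intervalIntegrable; fun_prop
end

section
/- Let n ≥ 2, λ > 0, x ∈ ℝ^n, R > 0, and let f be a smooth real-valued function on an open neighborhood of the closed ball B(x, R) ⊂ ℝ^n satisfying Δf = −λf there. Define the spherical average Av(r) = (1/(nω_n r^{n−1})) ∫_{∂B(x,r)} f dσ for 0 < r < R, where σ is the (n−1)-dimensional surface measure on the sphere ∂B(x,r) and ω_n is the volume of the unit ball in ℝ^n. Then Av extends continuously to r = 0 with Av(0) = f(x), is differentiable on (0, R), and satisfies Av'(r) = −(λ/r^{n−1}) ∫₀^r s^{n−1} Av(s) ds for all 0 < r < R. -/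
open scoped Real
open MeasureTheory Metric

open Set Function in
/-- Integration in polar coordinates. -/
theorem sph_polar {n : ℕ} (hn : 2 ≤ n) (F : EuclideanSpace ℝ (Fin n) → ℝ)
    (hF : Integrable F) :
    ∫ y, F y = ∫ r in Ioi (0:ℝ), r ^ (n - 1) *
      ∫ ω : sphere (0 : EuclideanSpace ℝ (Fin n)) 1, F (r • (ω : EuclideanSpace ℝ (Fin n)))
        ∂((volume : Measure (EuclideanSpace ℝ (Fin n))).toSphere) := by
  have hne : NeZero n := ⟨by omega⟩
  have hnt : Nontrivial (EuclideanSpace ℝ (Fin n)) := by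
    apply Module.nontrivial_of_finrank_pos (R := ℝ)
    rw [finrank_euclideanSpace_fin]; omega
  set μ : Measure (EuclideanSpace ℝ (Fin n)) := volume with hμ
  have hdim : Module.finrank ℝ (EuclideanSpace ℝ (Fin n)) = n := finrank_euclideanSpace_fin
  have hmp := μ.measurePreserving_homeomorphUnitSphereProd
  rw [hdim] at hmp
  have hcomp : ∀ y : ({(0:EuclideanSpace ℝ (Fin n))}ᶜ : Set (EuclideanSpace ℝ (Fin n))),
      F y = (fun p : sphere (0 : EuclideanSpace ℝ (Fin n)) 1 × Ioi (0:ℝ) =>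
        F (p.2.1 • (p.1 : EuclideanSpace ℝ (Fin n)))) (homeomorphUnitSphereProd _ y) := by
    intro y
    have hy : ‖(y : EuclideanSpace ℝ (Fin n))‖ ≠ 0 := norm_ne_zero_iff.2 y.2
    simp [smul_smul, hy]
  have hint : Integrable (fun p : sphere (0 : EuclideanSpace ℝ (Fin n)) 1 × Ioi (0:ℝ) =>
        F (p.2.1 • (p.1 : EuclideanSpace ℝ (Fin n))))
        (μ.toSphere.prod (.volumeIoiPow (n - 1))) := by
    rw [← hmp.integrable_comp_emb (Homeomorph.measurableEmbedding _)]
    have : Integrable (F ∘ (Subtype.val : ({(0:EuclideanSpace ℝ (Fin n))}ᶜ : Set _) → _))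
        (μ.comap Subtype.val) := by
      rw [← integrableOn_iff_comap_subtypeVal (measurableSet_singleton _).compl]
      exact hF.integrableOn
    refine this.congr (.of_forall fun y => hcomp y)
  calc ∫ y, F y ∂μ
      = ∫ y : ({(0:EuclideanSpace ℝ (Fin n))}ᶜ : Set (EuclideanSpace ℝ (Fin n))), F y
          ∂(μ.comap (↑)) := by
        rw [integral_subtype_comap (measurableSet_singleton _).compl F,
          restrict_compl_singleton]
    _ = ∫ p, F (p.2.1 • (p.1 : EuclideanSpace ℝ (Fin n)))
          ∂μ.toSphere.prod (.volumeIoiPow (n - 1)) := by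
        rw [← hmp.integral_comp (Homeomorph.measurableEmbedding _)]
        exact integral_congr_ae (.of_forall fun y => hcomp y)
    _ = ∫ r : Ioi (0:ℝ), ∫ ω, F (r.1 • (ω : EuclideanSpace ℝ (Fin n))) ∂μ.toSphere
          ∂(.volumeIoiPow (n - 1)) := integral_prod_symm _ hint
    _ = _ := by
        simp only [Measure.volumeIoiPow, ENNReal.ofReal]
        rw [integral_withDensity_eq_integral_smul,
          integral_subtype_comap measurableSet_Ioi fun a ↦ Real.toNNReal (a ^ (n - 1)) •
            ∫ ω, F (a • (ω : EuclideanSpace ℝ (Fin n))) ∂μ.toSphere,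
          setIntegral_congr_fun measurableSet_Ioi fun x hx ↦ ?_]
        · simp only [NNReal.smul_def]
          rw [Real.coe_toNNReal _ (pow_nonneg hx.out.le _), smul_eq_mul]
        · exact (measurable_subtype_coe.pow_const _).real_toNNReal

/-- Continuity of the integral over the sphere. -/
theorem sph_cont {n : ℕ} (K : ℝ → EuclideanSpace ℝ (Fin n) → ℝ)
    (hK : Continuous (Function.uncurry K)) :
    Continuous fun r : ℝ => ∫ ω : sphere (0 : EuclideanSpace ℝ (Fin n)) 1,
      K r (ω : EuclideanSpace ℝ (Fin n))
        ∂((volume : Measure (EuclideanSpace ℝ (Fin n))).toSphere) := by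
  have h : Continuous (Function.uncurry fun (r : ℝ)
      (ω : sphere (0 : EuclideanSpace ℝ (Fin n)) 1) => K r (ω : EuclideanSpace ℝ (Fin n))) := by
    exact hK.comp (continuous_fst.prodMk (continuous_subtype_val.comp continuous_snd))
  have := continuous_parametric_integral_of_continuous
    (μ := (volume : Measure (EuclideanSpace ℝ (Fin n))).toSphere) h isCompact_univ
  simpa using this

theorem sph_deriv {n : ℕ} (G : EuclideanSpace ℝ (Fin n) → ℝ) (hG : ContDiff ℝ 2 G) (r : ℝ) :
    HasDerivAt (fun r : ℝ => ∫ ω : sphere (0 : EuclideanSpace ℝ (Fin n)) 1,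
      G (r • (ω : EuclideanSpace ℝ (Fin n)))
        ∂((volume : Measure (EuclideanSpace ℝ (Fin n))).toSphere))
      (∫ ω : sphere (0 : EuclideanSpace ℝ (Fin n)) 1,
      fderiv ℝ G (r • (ω : EuclideanSpace ℝ (Fin n))) (ω : EuclideanSpace ℝ (Fin n))
        ∂((volume : Measure (EuclideanSpace ℝ (Fin n))).toSphere)) r := by
  have hdG : Continuous (fderiv ℝ G) := hG.continuous_fderiv (by norm_num)
  have hGc := hG.continuous
  have hc : Continuous (fun p : ℝ × sphere (0 : EuclideanSpace ℝ (Fin n)) 1 =>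
      fderiv ℝ G (p.1 • (p.2 : EuclideanSpace ℝ (Fin n))) (p.2 : EuclideanSpace ℝ (Fin n))) := by
    fun_prop
  obtain ⟨C, hC⟩ := ((isCompact_closedBall r 1).prod
    (isCompact_univ (X := sphere (0 : EuclideanSpace ℝ (Fin n)) 1))).exists_bound_of_continuousOn
    hc.continuousOn
  refine (hasDerivAt_integral_of_dominated_loc_of_deriv_le
    (F := fun (r : ℝ) (ω : sphere (0 : EuclideanSpace ℝ (Fin n)) 1) =>
      G (r • (ω : EuclideanSpace ℝ (Fin n))))
    (F' := fun (r : ℝ) (ω : sphere (0 : EuclideanSpace ℝ (Fin n)) 1) =>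
      fderiv ℝ G (r • (ω : EuclideanSpace ℝ (Fin n))) (ω : EuclideanSpace ℝ (Fin n)))
    (bound := fun _ => C)
    (closedBall_mem_nhds r one_pos) ?_ ?_ ?_ ?_ ?_ ?_).2
  · refine .of_forall fun s => Continuous.aestronglyMeasurable ?_
    fun_prop
  · have : Continuous (fun ω : sphere (0 : EuclideanSpace ℝ (Fin n)) 1 =>
      G (r • (ω : EuclideanSpace ℝ (Fin n)))) := by fun_prop
    exact this.integrable_of_hasCompactSupport (HasCompactSupport.of_compactSpace _)
  · refine Continuous.aestronglyMeasurable ?_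
    fun_prop
  · exact .of_forall fun ω s hs => hC (s, ω) ⟨hs, trivial⟩
  · exact integrable_const _
  · refine .of_forall fun ω s hs => ?_
    have h1 : HasFDerivAt G (fderiv ℝ G (s • (ω : EuclideanSpace ℝ (Fin n))))
      (s • (ω : EuclideanSpace ℝ (Fin n))) :=
      (hG.differentiable (by norm_num) _).hasFDerivAt
    have h2 : HasDerivAt (fun s : ℝ => s • (ω : EuclideanSpace ℝ (Fin n)))
      (ω : EuclideanSpace ℝ (Fin n)) s := by
      simpa using (hasDerivAt_id s).smul_const (ω : EuclideanSpace ℝ (Fin n))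
    exact h1.comp_hasDerivAt s h2

open Set in
/-- The weak form of the radial equation. -/
theorem sph_weak {n : ℕ} (hn : 2 ≤ n) (lam R : ℝ) (hR : 0 < R)
    (G : EuclideanSpace ℝ (Fin n) → ℝ) (hG : ContDiff ℝ 2 G)
    (heig : ∀ y ∈ ball (0 : EuclideanSpace ℝ (Fin n)) R, euclidLaplacian G y = -lam * G y)
    (A B H : ℝ → ℝ)
    (hA : ∀ r : ℝ, A r = ∫ ω : sphere (0 : EuclideanSpace ℝ (Fin n)) 1,
      G (r • (ω : EuclideanSpace ℝ (Fin n)))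
        ∂((volume : Measure (EuclideanSpace ℝ (Fin n))).toSphere))
    (hB : ∀ r : ℝ, B r = ∫ ω : sphere (0 : EuclideanSpace ℝ (Fin n)) 1,
      fderiv ℝ G (r • (ω : EuclideanSpace ℝ (Fin n))) (ω : EuclideanSpace ℝ (Fin n))
        ∂((volume : Measure (EuclideanSpace ℝ (Fin n))).toSphere))
    (hAc : Continuous A) (hBc : Continuous B)
    (hH : ∀ r, H r = -lam * ∫ s in (0:ℝ)..r, s ^ (n - 1) * A s)
    (κ : ℝ → ℝ) (hκ : Continuous κ) (hκR : ∀ t, R ≤ t → κ t = 0) :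
    ∫ r in (0:ℝ)..R, κ r * (r * (r ^ (n - 1) * B r - H r)) = 0 := by
  have hdG : Continuous (fderiv ℝ G) := hG.continuous_fderiv (by norm_num)
  have hGc := hG.continuous
  have hdG1 : ∀ v : EuclideanSpace ℝ (Fin n), ContDiff ℝ 1 (fun y => fderiv ℝ G y v) := fun v =>
    (hG.fderiv_right (m := 1) (by norm_num)).clm_apply contDiff_const
  obtain ⟨Ψ, hΨdef⟩ : ∃ Ψ : ℝ → ℝ, ∀ s, Ψ s = ∫ u in (R ^ 2)..s, κ (√u) / 2 := ⟨_, fun _ => rfl⟩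
  have hκs : Continuous fun u => κ (√u) / 2 := by fun_prop
  have hΨ : ∀ s, HasDerivAt Ψ (κ (√s) / 2) s := by
    intro s
    have := hκs.integral_hasStrictDerivAt (R ^ 2) s
    rw [show Ψ = fun s => ∫ u in (R ^ 2)..s, κ (√u) / 2 from funext hΨdef]
    exact this.hasDerivAt
  have hΨ0 : ∀ s, R ^ 2 ≤ s → Ψ s = 0 := by
    intro s hs
    rw [hΨdef, intervalIntegral.integral_congr (g := fun _ => 0)]
    · simp
    · intro u hu
      rw [uIcc_of_le hs] at hu
      have : R ≤ √u := Real.le_sqrt_of_sq_le hu.1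
      simp [hκR _ this]
  have hΨc : Continuous Ψ := continuous_iff_continuousAt.2 fun s => (hΨ s).continuousAt
  obtain ⟨φ, hφdef⟩ : ∃ φ : EuclideanSpace ℝ (Fin n) → ℝ, ∀ y, φ y = Ψ (‖y‖ ^ 2) := ⟨_, fun _ => rfl⟩
  have hφc : Continuous φ := by
    rw [show φ = fun y => Ψ (‖y‖ ^ 2) from funext hφdef]; fun_prop
  have hφd : ∀ y, HasFDerivAt φ (κ ‖y‖ • innerSL ℝ y) y := by
    intro y
    have h1 := (hΨ (‖y‖ ^ 2)).comp_hasFDerivAt y (hasStrictFDerivAt_norm_sq y).hasFDerivAt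
    rw [show φ = fun y => Ψ (‖y‖ ^ 2) from funext hφdef]
    have h2 : (κ √(‖y‖ ^ 2) / 2) • 2 • (innerSL ℝ) y = κ ‖y‖ • innerSL ℝ y := by
      rw [Real.sqrt_sq (norm_nonneg _)]
      ext v
      simp
      ring
    rw [h2] at h1
    exact h1
  have hφ0 : ∀ y, R ≤ ‖y‖ → φ y = 0 := fun y hy => by
    rw [hφdef]; exact hΨ0 _ (by gcongr)
  have hφs : HasCompactSupport φ := HasCompactSupport.intro (isCompact_closedBall (0:EuclideanSpace ℝ (Fin n)) R)
    fun y hy => hφ0 y (by simpa using (not_le.1 (by simpa using hy)).le)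
  have hκsupp : HasCompactSupport fun y : EuclideanSpace ℝ (Fin n) => κ ‖y‖ :=
    HasCompactSupport.intro (isCompact_closedBall (0:EuclideanSpace ℝ (Fin n)) R)
      fun y hy => hκR _ (by simpa using (not_le.1 (by simpa using hy)).le)
  have hfφ : ∀ y, fderiv ℝ φ y = κ ‖y‖ • innerSL ℝ y := fun y => (hφd y).fderiv
  have hi1 : ∀ i : Fin n, Integrable (fun y => φ y * fderiv ℝ
      (fun z => fderiv ℝ G z (EuclideanSpace.single i 1)) y (EuclideanSpace.single i 1)) := by
    intro i
    have := (hdG1 (EuclideanSpace.single i 1)).continuous_fderiv (by norm_num)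
    exact Continuous.integrable_of_hasCompactSupport (by fun_prop) hφs.mul_right
  have hi2 : ∀ i : Fin n, Integrable (fun y => fderiv ℝ φ y (EuclideanSpace.single i 1) *
      fderiv ℝ G y (EuclideanSpace.single i 1)) := by
    intro i
    have h2 : Continuous fun y : EuclideanSpace ℝ (Fin n) => innerSL ℝ y (EuclideanSpace.single i (1:ℝ)) := by
      simp only [innerSL_apply_apply]; fun_prop
    simp only [hfφ, smul_apply, smul_eq_mul]
    refine Continuous.integrable_of_hasCompactSupport (by fun_prop) ?_
    exact (hκsupp.mul_right).mul_right
  have hibp : ∀ i : Fin n, ∫ y, φ y * fderiv ℝ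
      (fun z => fderiv ℝ G z (EuclideanSpace.single i 1)) y (EuclideanSpace.single i 1)
      = - ∫ y, fderiv ℝ φ y (EuclideanSpace.single i 1) *
        fderiv ℝ G y (EuclideanSpace.single i 1) := by
    intro i
    refine integral_mul_fderiv_eq_neg_fderiv_mul_of_integrable (hi2 i) (hi1 i) ?_ ?_ ?_
    · exact Continuous.integrable_of_hasCompactSupport (by fun_prop) hφs.mul_right
    · exact fun y _ => (hφd y).differentiableAt
    · exact fun y _ => (hdG1 _).differentiable (by norm_num) y
  have hsum : ∫ y, φ y * euclidLaplacian G y = - ∫ y, κ ‖y‖ * fderiv ℝ G y y := by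
    have e1 : ∀ y, φ y * euclidLaplacian G y = ∑ i, φ y * fderiv ℝ
      (fun z => fderiv ℝ G z (EuclideanSpace.single i 1)) y (EuclideanSpace.single i 1) := by
      intro y; rw [euclidLaplacian, Finset.mul_sum]
    have e2 : ∀ y : EuclideanSpace ℝ (Fin n), κ ‖y‖ * fderiv ℝ G y y = ∑ i, fderiv ℝ φ y (EuclideanSpace.single i 1) *
        fderiv ℝ G y (EuclideanSpace.single i 1) := by
      intro y
      have hy : y = ∑ i, y i • (EuclideanSpace.single i (1:ℝ) : EuclideanSpace ℝ (Fin n)) := by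
        ext j
        simp [Finset.sum_apply, Pi.single_apply]
      have : fderiv ℝ G y y = ∑ i, y i * fderiv ℝ G y (EuclideanSpace.single i 1) := by
        conv_lhs => rw [hy]
        simp only [map_sum, map_smul, smul_eq_mul]
        rw [← hy]
      rw [this, Finset.mul_sum]
      refine Finset.sum_congr rfl fun i _ => ?_
      rw [hfφ]
      simp [EuclideanSpace.inner_single_right]
      ring
    simp only [e1, e2]
    rw [integral_finsetSum _ fun i _ => hi1 i, integral_finsetSum _ fun i _ => hi2 i,
      ← Finset.sum_neg_distrib]
    exact Finset.sum_congr rfl fun i _ => hibp i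
  have hlap : ∫ y, φ y * euclidLaplacian G y = -lam * ∫ y, φ y * G y := by
    rw [← integral_const_mul]
    refine integral_congr_ae (.of_forall fun y => ?_)
    by_cases hy : ‖y‖ < R
    · simp only [heig y (by simpa using hy)]; ring
    · simp [hφ0 y (not_lt.1 hy)]
  have hp1 : ∫ y, φ y * G y = ∫ r in (0:ℝ)..R, r ^ (n - 1) * (Ψ (r ^ 2) * A r) := by
    have hint : Integrable fun y => φ y * G y :=
      Continuous.integrable_of_hasCompactSupport (by fun_prop) hφs.mul_right
    rw [sph_polar hn _ hint,
      intervalIntegral.integral_of_le hR.le]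
    symm
    rw [setIntegral_eq_of_subset_of_forall_sdiff_eq_zero measurableSet_Ioi
      (show Ioc (0:ℝ) R ⊆ Ioi 0 from fun t ht => ht.1)]
    · refine setIntegral_congr_fun measurableSet_Ioc fun r hr => ?_
      rw [hA, ← integral_const_mul]
      congr 1
      refine integral_congr_ae (.of_forall fun ω => ?_)
      simp only [hφdef]
      rw [norm_smul, norm_eq_of_mem_sphere, mul_one, Real.norm_eq_abs, sq_abs]
    · intro r hr
      have hr1 : R < r := by
        by_contra h
        exact hr.2 ⟨hr.1, not_lt.1 h⟩
      rw [integral_congr_ae (g := fun _ => 0)]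
      · simp
      · refine .of_forall fun ω => ?_
        simp only
        rw [hφ0, zero_mul]
        rw [norm_smul, norm_eq_of_mem_sphere, mul_one, Real.norm_eq_abs]
        exact hr1.le.trans (le_abs_self r)
  have hp2 : ∫ y : EuclideanSpace ℝ (Fin n), κ ‖y‖ * fderiv ℝ G y y
      = ∫ r in (0:ℝ)..R, r ^ (n - 1) * (κ r * (r * B r)) := by
    have hint : Integrable fun y : EuclideanSpace ℝ (Fin n) => κ ‖y‖ * fderiv ℝ G y y :=
      Continuous.integrable_of_hasCompactSupport (by fun_prop) hκsupp.mul_right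
    rw [sph_polar hn _ hint, intervalIntegral.integral_of_le hR.le]
    symm
    rw [setIntegral_eq_of_subset_of_forall_sdiff_eq_zero measurableSet_Ioi
      (show Ioc (0:ℝ) R ⊆ Ioi 0 from fun t ht => ht.1)]
    · refine setIntegral_congr_fun measurableSet_Ioc fun r hr => ?_
      rw [hB, ← integral_const_mul, ← integral_const_mul]
      congr 1
      refine integral_congr_ae (.of_forall fun ω => ?_)
      simp only
      rw [norm_smul, norm_eq_of_mem_sphere, mul_one, Real.norm_eq_abs, abs_of_pos hr.1]
      simp
    · intro r hr
      have hr1 : R < r := by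
        by_contra h
        exact hr.2 ⟨hr.1, not_lt.1 h⟩
      rw [integral_congr_ae (g := fun _ => 0)]
      · simp
      · refine .of_forall fun ω => ?_
        simp only
        rw [hκR, zero_mul]
        rw [norm_smul, norm_eq_of_mem_sphere, mul_one, Real.norm_eq_abs]
        exact hr1.le.trans (le_abs_self r)
  have hHd : ∀ r, HasDerivAt H (-lam * (r ^ (n - 1) * A r)) r := by
    intro r
    have hc : Continuous fun s : ℝ => s ^ (n - 1) * A s := by fun_prop
    rw [show H = fun r => -lam * ∫ s in (0:ℝ)..r, s ^ (n - 1) * A s from funext hH]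
    exact (hc.integral_hasStrictDerivAt 0 r).hasDerivAt.const_mul _
  have hHc : Continuous H := continuous_iff_continuousAt.2 fun s => (hHd s).continuousAt
  have hparts : ∫ r in (0:ℝ)..R, Ψ (r ^ 2) * (-lam * (r ^ (n - 1) * A r))
      = Ψ (R ^ 2) * H R - Ψ (0 ^ 2) * H 0 - ∫ r in (0:ℝ)..R, (κ |r| * r) * H r := by
    refine intervalIntegral.integral_mul_deriv_eq_deriv_mul (u := fun r => Ψ (r ^ 2))
      (u' := fun r => κ |r| * r)
      (fun r _ => ?_) (fun r _ => hHd r) ?_ ?_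
    · have := (hΨ (r ^ 2)).comp r ((hasDerivAt_id r).pow 2)
      rw [Real.sqrt_sq_eq_abs] at this
      refine HasDerivAt.congr_deriv (f := fun r => Ψ (r ^ 2)) this ?_
      simp only [id, Nat.cast_ofNat]
      ring
    · exact Continuous.intervalIntegrable (by fun_prop) _ _
    · exact Continuous.intervalIntegrable (by fun_prop) _ _
  rw [hΨ0 _ le_rfl, show H 0 = 0 by simp [hH]] at hparts
  have habs : ∫ r in (0:ℝ)..R, (κ |r| * r) * H r = ∫ r in (0:ℝ)..R, (κ r * r) * H r := by
    refine intervalIntegral.integral_congr fun r hr => ?_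
    rw [uIcc_of_le hR.le] at hr
    rw [abs_of_nonneg hr.1]
  have hsplit : ∫ r in (0:ℝ)..R, κ r * (r * (r ^ (n - 1) * B r - H r))
      = (∫ r in (0:ℝ)..R, r ^ (n - 1) * (κ r * (r * B r))) - ∫ r in (0:ℝ)..R, (κ r * r) * H r := by
    rw [← intervalIntegral.integral_sub]
    · refine intervalIntegral.integral_congr fun r hr => ?_
      ring
    · exact Continuous.intervalIntegrable (by fun_prop) _ _
    · exact Continuous.intervalIntegrable (by fun_prop) _ _
  have hl2 : -lam * ∫ r in (0:ℝ)..R, r ^ (n - 1) * (Ψ (r ^ 2) * A r)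
      = ∫ r in (0:ℝ)..R, Ψ (r ^ 2) * (-lam * (r ^ (n - 1) * A r)) := by
    rw [← intervalIntegral.integral_const_mul]
    refine intervalIntegral.integral_congr fun r hr => ?_
    ring
  rw [hsplit, ← hp2, ← habs]
  rw [hlap, hp1, hl2, hparts] at hsum
  linarith

open Set in
theorem sph_ode {n : ℕ} (hn : 2 ≤ n) (lam R : ℝ) (hR : 0 < R)
    (G : EuclideanSpace ℝ (Fin n) → ℝ) (hG : ContDiff ℝ 2 G)
    (heig : ∀ y ∈ ball (0 : EuclideanSpace ℝ (Fin n)) R, euclidLaplacian G y = -lam * G y)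
    (A : ℝ → ℝ)
    (hA : ∀ r : ℝ, A r = ∫ ω : sphere (0 : EuclideanSpace ℝ (Fin n)) 1,
      G (r • (ω : EuclideanSpace ℝ (Fin n)))
        ∂((volume : Measure (EuclideanSpace ℝ (Fin n))).toSphere)) :
    Continuous A ∧ ∀ r ∈ Ioo (0:ℝ) R,
      HasDerivAt A (-(lam / r ^ (n - 1)) * ∫ s in (0 : ℝ)..r, s ^ (n - 1) * A s) r := by
  have hdG : Continuous (fderiv ℝ G) := hG.continuous_fderiv (by norm_num)
  have hGc := hG.continuous
  obtain ⟨B, hB⟩ : ∃ B : ℝ → ℝ, ∀ r : ℝ, B r = ∫ ω : sphere (0 : EuclideanSpace ℝ (Fin n)) 1,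
      fderiv ℝ G (r • (ω : EuclideanSpace ℝ (Fin n))) (ω : EuclideanSpace ℝ (Fin n))
        ∂((volume : Measure (EuclideanSpace ℝ (Fin n))).toSphere) := ⟨_, fun _ => rfl⟩
  have hBc : Continuous B := by
    rw [funext hB]
    refine sph_cont (fun r ω => fderiv ℝ G (r • ω) ω) ?_
    simp only [Function.uncurry_def]
    fun_prop
  have hAB : ∀ r, HasDerivAt A (B r) r := by
    intro r
    rw [funext hA, hB]
    exact sph_deriv G hG r
  have hAc : Continuous A := continuous_iff_continuousAt.2 fun s => (hAB s).continuousAt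
  refine ⟨hAc, ?_⟩
  obtain ⟨H, hH⟩ : ∃ H : ℝ → ℝ, ∀ r, H r = -lam * ∫ s in (0:ℝ)..r, s ^ (n - 1) * A s :=
    ⟨_, fun _ => rfl⟩
  have hHc : Continuous H := by
    have hc : Continuous fun s : ℝ => s ^ (n - 1) * A s := by fun_prop
    rw [funext hH]
    exact continuous_const.mul (continuous_iff_continuousAt.2 fun r =>
      (hc.integral_hasStrictDerivAt 0 r).hasDerivAt.continuousAt)
  have hqc : Continuous fun r : ℝ => r * (r ^ (n - 1) * B r - H r) := by fun_prop
  have hae : ∀ᵐ r : ℝ, r ∈ Ioo (0:ℝ) R → r * (r ^ (n - 1) * B r - H r) = 0 := by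
    refine isOpen_Ioo.ae_eq_zero_of_integral_contDiff_smul_eq_zero
      (hqc.locallyIntegrable.locallyIntegrableOn _) ?_
    intro κ hκ hκs hκt
    have hz : ∀ t, t ∉ Ioo (0:ℝ) R → κ t = 0 := fun t ht =>
      image_eq_zero_of_notMem_tsupport fun h => ht (hκt h)
    have := sph_weak hn lam R hR G hG heig A B H hA hB hAc hBc hH κ hκ.continuous
      fun t ht => hz t fun h => absurd h.2 (not_lt.2 ht)
    rw [intervalIntegral.integral_of_le hR.le] at this
    simp only [smul_eq_mul]
    rw [← this]
    symm
    refine setIntegral_eq_integral_of_forall_compl_eq_zero fun t ht => ?_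
    rw [hz t fun h => ht ⟨h.1, h.2.le⟩, zero_mul]
  have hev : EqOn (fun r : ℝ => r * (r ^ (n - 1) * B r - H r)) (fun _ => 0) (Ioo 0 R) := by
    refine Measure.eqOn_open_of_ae_eq (μ := (volume : Measure ℝ)) ?_ isOpen_Ioo
      hqc.continuousOn continuousOn_const
    rw [Filter.EventuallyEq, ae_restrict_iff' measurableSet_Ioo]
    exact hae
  intro r hr
  have h0 := hev hr
  have hr0 : r ≠ 0 := hr.1.ne'
  have h1 : r ^ (n - 1) * B r = H r := by
    have := (mul_eq_zero.1 h0).resolve_left hr0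
    linarith
  have h2 : B r = -(lam / r ^ (n - 1)) * ∫ s in (0 : ℝ)..r, s ^ (n - 1) * A s := by
    rw [hH] at h1
    have hp : r ^ (n - 1) ≠ 0 := pow_ne_zero _ hr0
    field_simp
    linarith
  rw [← h2]
  exact hAB r

/-- For an eigenfunction `−Δf = λf` near `B(x,R) ⊂ ℝⁿ`, the spherical average
`Av(r) = ⨍_{∂B(x,r)} f dσ` (realized as the mean of `ω ↦ f(x + r·ω)` over the unit
sphere with its surface measure) extends continuously to `r = 0` with `Av(0) = f(x)`,
is differentiable on `(0,R)`, and satisfies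
`Av'(r) = −(λ/r^{n−1}) ∫₀^r s^{n−1} Av(s) ds`. -/
theorem spherical_average_ode {n : ℕ} (hn : 2 ≤ n) (lam : ℝ) (hlam : 0 < lam)
    (x : EuclideanSpace ℝ (Fin n)) (R : ℝ) (hR : 0 < R)
    (U : Set (EuclideanSpace ℝ (Fin n))) (hU : IsOpen U) (hBU : closedBall x R ⊆ U)
    (f : EuclideanSpace ℝ (Fin n) → ℝ) (hf : ContDiffOn ℝ (⊤ : ℕ∞) f U)
    (heig : ∀ y ∈ U, euclidLaplacian f y = -lam * f y)
    (Av : ℝ → ℝ)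
    (hAv : ∀ r : ℝ, Av r =
      ⨍ ω : sphere (0 : EuclideanSpace ℝ (Fin n)) 1,
        f (x + r • (ω : EuclideanSpace ℝ (Fin n)))
        ∂((volume : Measure (EuclideanSpace ℝ (Fin n))).toSphere)) :
    ContinuousOn Av (Set.Icc 0 R) ∧ Av 0 = f x ∧
    ∀ r ∈ Set.Ioo (0 : ℝ) R,
      HasDerivAt Av (-(lam / r ^ (n - 1)) * ∫ s in (0 : ℝ)..r, s ^ (n - 1) * Av s) r := by

  have hnt : Nontrivial (EuclideanSpace ℝ (Fin n)) := by
    apply Module.nontrivial_of_finrank_pos (R := ℝ)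
    rw [finrank_euclideanSpace_fin]; omega
  have hne : (volume : Measure (EuclideanSpace ℝ (Fin n))).toSphere ≠ 0 :=
    Measure.toSphere_ne_zero _
  obtain ⟨δ, hδ, hδU⟩ := (isCompact_closedBall x R).exists_cthickening_subset_open hU hBU
  rw [cthickening_closedBall hδ.le hR.le] at hδU
  let χ : ContDiffBump x := ⟨δ / 2 + R, δ + R, by positivity, by linarith⟩
  have hg : ContDiff ℝ 2 fun y => χ y * f y := by
    rw [contDiff_iff_contDiffAt]
    intro y
    by_cases hy : y ∈ U
    · exact χ.contDiff.contDiffAt.mul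
        ((hf.contDiffAt (hU.mem_nhds hy)).of_le (by exact_mod_cast le_top))
    · have h0 : (fun y => χ y * f y) =ᶠ[nhds y] fun _ => 0 := by
        have hy' : y ∉ tsupport χ := by
          rw [χ.tsupport_eq]
          exact fun h => hy (hδU (by simpa [χ, add_comm] using h))
        filter_upwards [notMem_tsupport_iff_eventuallyEq.1 hy'] with z hz
        simp [hz]
      exact contDiffAt_const.congr_of_eventuallyEq h0
  set G : EuclideanSpace ℝ (Fin n) → ℝ := fun y => χ (x + y) * f (x + y) with hGdef
  have hG : ContDiff ℝ 2 G := hg.comp (contDiff_const.add contDiff_id)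
  have hGf : ∀ y : EuclideanSpace ℝ (Fin n), ‖y‖ < R + δ / 2 → G y = f (x + y) := by
    intro y hy
    have : χ (x + y) = 1 := by
      apply χ.one_of_mem_closedBall
      simp [χ]
      linarith
    simp [hGdef, this]
  have heigG : ∀ y ∈ ball (0 : EuclideanSpace ℝ (Fin n)) R,
      euclidLaplacian G y = -lam * G y := by
    intro y hy
    have hyR : ‖y‖ < R := by simpa using hy
    have hyU : x + y ∈ U := hBU (by simpa using hyR.le)
    rw [hGf y (by linarith), ← heig _ hyU]
    have h1 : ∀ z ∈ ball (0 : EuclideanSpace ℝ (Fin n)) R, fderiv ℝ G z = fderiv ℝ f (x + z) := by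
      intro z hz
      rw [← fderiv_comp_add_left]
      apply Filter.EventuallyEq.fderiv_eq
      filter_upwards [isOpen_ball.mem_nhds hz] with w hw
      have : ‖w‖ < R := by simpa using hw
      exact hGf w (by linarith)
    unfold euclidLaplacian
    refine Finset.sum_congr rfl fun i _ => ?_
    congr 1
    rw [← fderiv_comp_add_left]
    apply Filter.EventuallyEq.fderiv_eq
    filter_upwards [isOpen_ball.mem_nhds hy] with w hw
    rw [h1 w hw]
  obtain ⟨A, hA⟩ : ∃ A : ℝ → ℝ, ∀ r : ℝ, A r =
      ∫ ω : sphere (0 : EuclideanSpace ℝ (Fin n)) 1, G (r • (ω : EuclideanSpace ℝ (Fin n)))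
        ∂((volume : Measure (EuclideanSpace ℝ (Fin n))).toSphere) := ⟨_, fun _ => rfl⟩
  obtain ⟨hAc, hAd⟩ := sph_ode hn lam R hR G hG heigG A hA
  obtain ⟨c, hc⟩ : ∃ c : ℝ,
      c = ((volume : Measure (EuclideanSpace ℝ (Fin n))).toSphere.real Set.univ)⁻¹ := ⟨_, rfl⟩
  have hAvA : ∀ r ∈ Set.Icc 0 R, Av r = c * A r := by
    intro r hr
    rw [hAv, average_eq, smul_eq_mul, ← hc, hA]
    congr 1
    refine integral_congr_ae (.of_forall fun ω => ?_)
    refine (hGf _ ?_).symm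
    rw [norm_smul, norm_eq_of_mem_sphere, mul_one, Real.norm_eq_abs, abs_of_nonneg hr.1]
    linarith [hr.2]
  refine ⟨?_, ?_, ?_⟩
  · exact (continuous_const.mul hAc).continuousOn.congr hAvA
  · have : NeZero (volume : Measure (EuclideanSpace ℝ (Fin n))).toSphere := ⟨hne⟩
    rw [hAv]
    simp only [zero_smul, add_zero]
    exact average_const _ _
  · intro r hr
    have h1 : ∫ s in (0 : ℝ)..r, s ^ (n - 1) * Av s
        = c * ∫ s in (0 : ℝ)..r, s ^ (n - 1) * A s := by
      rw [← intervalIntegral.integral_const_mul]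
      refine intervalIntegral.integral_congr fun s hs => ?_
      rw [Set.uIcc_of_le hr.1.le] at hs
      rw [hAvA s ⟨hs.1, hs.2.trans hr.2.le⟩]
      ring
    have h2 := (hAd r hr).const_mul c
    rw [h1, show -(lam / r ^ (n - 1)) * (c * ∫ s in (0 : ℝ)..r, s ^ (n - 1) * A s)
      = c * (-(lam / r ^ (n - 1)) * ∫ s in (0 : ℝ)..r, s ^ (n - 1) * A s) by ring]
    refine h2.congr_of_eventuallyEq ?_
    filter_upwards [Ioo_mem_nhds hr.1 hr.2] with s hs
    exact hAvA s ⟨hs.1.le, hs.2.le⟩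
end

section
/- Let n ≥ 3, let x ∈ ℝ^n, and let f be a real-valued function continuous on a neighborhood of x. Define Q(r) = ∫_{‖x−y‖ ≤ r} f(y)/‖x−y‖^{n−2} dy for small r > 0. Then lim_{r → 0⁺} Q(r)/r² = (n ω_n / 2) · f(x), where ω_n is the volume of the unit ball in ℝ^n; in particular Q(0) = 0 and Q'(0) = 0 and, when f is twice differentiable in r through this formula, Q''(0) = n ω_n f(x). -/
open scoped Real Topology
open MeasureTheory Metric

lemma kernel_aux {n : ℕ} (hn : 3 ≤ n) (x : EuclideanSpace ℝ (Fin n)) {r : ℝ} (hr : 0 < r) :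
    IntegrableOn (fun y => 1 / ‖x - y‖ ^ (n - 2)) (closedBall x r) ∧
    ∫ y in closedBall x r, 1 / ‖x - y‖ ^ (n - 2) =
      n * (volume (ball (0 : EuclideanSpace ℝ (Fin n)) 1)).toReal / 2 * r ^ 2 := by
  have : Nonempty (Fin n) := ⟨⟨0, by omega⟩⟩
  have : Nontrivial (EuclideanSpace ℝ (Fin n)) := inferInstance
  set g : ℝ → ℝ := (Set.Iic r).indicator (fun t => 1 / t ^ (n - 2)) with hg
  have key : (closedBall x r).indicator (fun y => 1 / ‖x - y‖ ^ (n - 2))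
      = fun y => (fun z => g ‖z‖) (x - y) := by
    funext y
    simp only [hg, Set.indicator, mem_closedBall, Set.mem_Iic, dist_comm y x, dist_eq_norm]
  have hpt : ∀ t ∈ Set.Ioi (0:ℝ), t ^ (Module.finrank ℝ (EuclideanSpace ℝ (Fin n)) - 1) • g t
      = (Set.Ioc 0 r).indicator (fun t => t) t := by
    intro t ht
    have ht' : (0:ℝ) < t := ht
    rw [finrank_euclideanSpace_fin]
    simp only [hg, Set.indicator, Set.mem_Iic, Set.mem_Ioc, ht', true_and, smul_eq_mul]
    split_ifs
    · have : n - 1 = (n - 2) + 1 := by omega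
      rw [this, pow_succ]
      field_simp
    · simp
  have hint : IntegrableOn (fun t : ℝ => t) (Set.Ioc 0 r) :=
    (continuous_id.integrableOn_Icc (a := 0) (b := r)).mono_set Set.Ioc_subset_Icc_self
  constructor
  · rw [← integrable_indicator_iff measurableSet_closedBall, key]
    refine Integrable.comp_sub_left (f := fun z : EuclideanSpace ℝ (Fin n) => g ‖z‖) ?_ x
    rw [integrable_fun_norm_addHaar volume (f := g)]
    rw [integrableOn_congr_fun hpt measurableSet_Ioi]
    exact ((integrable_indicator_iff measurableSet_Ioc).2 hint).integrableOn
  · rw [← integral_indicator measurableSet_closedBall, key,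
      integral_sub_left_eq_self (fun z => g ‖z‖) volume x, integral_fun_norm_addHaar,
      setIntegral_congr_fun measurableSet_Ioi hpt, setIntegral_indicator measurableSet_Ioc,
      Set.inter_eq_right.2 Set.Ioc_subset_Ioi_self, ← intervalIntegral.integral_of_le hr.le,
      integral_id, finrank_euclideanSpace_fin]
    simp only [nsmul_eq_mul, smul_eq_mul, Measure.real]
    ring

/-- For `n ≥ 3`, `f` continuous near `x ∈ ℝⁿ`, the Newtonian-potential mass
`Q(r) = ∫_{‖x−y‖ ≤ r} f(y)/‖x−y‖^{n−2} dy` satisfies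
`Q(r)/r² → (nω_n/2)·f(x)` as `r → 0⁺` (with `ω_n` the volume of the unit ball);
in particular `Q(0) = 0` and `Q'(0) = 0`. -/
theorem newtonian_mass_asymptotics {n : ℕ} (hn : 3 ≤ n)
    (x : EuclideanSpace ℝ (Fin n)) (f : EuclideanSpace ℝ (Fin n) → ℝ)
    (U : Set (EuclideanSpace ℝ (Fin n))) (hU : U ∈ 𝓝 x) (hf : ContinuousOn f U)
    (Q : ℝ → ℝ)
    (hQ : ∀ r : ℝ, Q r = ∫ y in closedBall x r, f y / ‖x - y‖ ^ (n - 2)) :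
    Filter.Tendsto (fun r => Q r / r ^ 2) (𝓝[>] 0)
      (𝓝 ((n * (volume (ball (0 : EuclideanSpace ℝ (Fin n)) 1)).toReal / 2) * f x)) ∧
    Q 0 = 0 ∧ HasDerivAt Q 0 0 := by
  set C : ℝ := n * (volume (ball (0 : EuclideanSpace ℝ (Fin n)) 1)).toReal / 2 with hC
  have hC0 : 0 ≤ C := by positivity
  have main : ∀ ε > 0, ∃ δ > 0, ∀ r, 0 < r → r < δ → |Q r - f x * (C * r ^ 2)| ≤ ε * (C * r ^ 2) := by
    intro ε hε
    have hc : ContinuousAt f x := hf.continuousAt hU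
    obtain ⟨δ₁, hδ₁, h1⟩ := Metric.continuousAt_iff.1 hc ε hε
    obtain ⟨δ₂, hδ₂, h2⟩ := Metric.mem_nhds_iff.1 hU
    refine ⟨min δ₁ δ₂, lt_min hδ₁ hδ₂, fun r hr hrd => ?_⟩
    obtain ⟨hi, hv⟩ := kernel_aux hn x hr
    have hsub : closedBall x r ⊆ U := (closedBall_subset_ball (hrd.trans_le (min_le_right _ _))).trans h2
    have hb : ∀ y ∈ closedBall x r, |f y - f x| ≤ ε := fun y hy =>
      (h1 (lt_of_le_of_lt (mem_closedBall.1 hy) (hrd.trans_le (min_le_left _ _)))).le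
    have hbd : ∀ᵐ y ∂(volume.restrict (closedBall x r)),
        ‖(f y - f x) * (1 / ‖x - y‖ ^ (n - 2))‖ ≤ ε * (1 / ‖x - y‖ ^ (n - 2)) := by
      filter_upwards [ae_restrict_mem measurableSet_closedBall] with y hy
      have h0 : 0 ≤ 1 / ‖x - y‖ ^ (n - 2) := by positivity
      rw [norm_mul, Real.norm_eq_abs, Real.norm_of_nonneg h0]
      exact mul_le_mul_of_nonneg_right (hb y hy) h0
    have hm : AEStronglyMeasurable f (volume.restrict (closedBall x r)) :=
      (hf.mono hsub).aestronglyMeasurable measurableSet_closedBall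
    have hi2 : IntegrableOn (fun y => (f y - f x) * (1 / ‖x - y‖ ^ (n - 2))) (closedBall x r) :=
      Integrable.mono' (hi.const_mul ε)
        ((hm.sub aestronglyMeasurable_const).mul hi.aestronglyMeasurable) hbd
    have heq : Q r - f x * (C * r ^ 2)
        = ∫ y in closedBall x r, (f y - f x) * (1 / ‖x - y‖ ^ (n - 2)) := by
      rw [← hv, ← integral_const_mul, hQ, sub_eq_iff_eq_add, ← integral_add hi2 (hi.const_mul _)]
      congr 1
      funext y
      ring
    rw [heq, ← hv, ← integral_const_mul, ← Real.norm_eq_abs]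
    exact norm_integral_le_of_norm_le (hi.const_mul ε) hbd
  have hQ0 : Q 0 = 0 := by
    have : Nonempty (Fin n) := ⟨⟨0, by omega⟩⟩
    rw [hQ, closedBall_zero]
    exact setIntegral_measure_zero _ (measure_singleton x)
  have hQneg : ∀ r < 0, Q r = 0 := by
    intro r hr
    rw [hQ, closedBall_eq_empty.2 hr]
    simp
  refine ⟨?_, hQ0, ?_⟩
  · rw [Metric.tendsto_nhdsWithin_nhds]
    intro ε hε
    obtain ⟨δ, hδ, h⟩ := main (ε / (C + 1)) (by positivity)
    refine ⟨δ, hδ, fun {r} hr hrd => ?_⟩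
    have hr : 0 < r := hr
    rw [Real.dist_eq, sub_zero, abs_of_pos hr] at hrd
    have hb := h r hr hrd
    have e : Q r / r ^ 2 - C * f x = (Q r - f x * (C * r ^ 2)) / r ^ 2 := by
      field_simp
    rw [Real.dist_eq, e, abs_div, abs_of_pos (pow_pos hr 2), div_lt_iff₀ (pow_pos hr 2)]
    refine hb.trans_lt ?_
    rw [← mul_assoc]
    refine mul_lt_mul_of_pos_right ?_ (pow_pos hr 2)
    rw [div_mul_eq_mul_div, div_lt_iff₀ (by positivity)]
    nlinarith
  · obtain ⟨δ, hδ, h⟩ := main 1 one_pos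
    have hO : Q =O[𝓝 0] fun r => ‖r - 0‖ ^ 2 := by
      refine Asymptotics.IsBigO.of_bound ((1 + |f x|) * C) ?_
      filter_upwards [Iio_mem_nhds hδ] with r hr
      rw [sub_zero, norm_pow, norm_norm, Real.norm_eq_abs, Real.norm_eq_abs, sq_abs]
      rcases lt_trichotomy r 0 with h0 | h0 | h0
      · rw [hQneg r h0, abs_zero]; positivity
      · rw [h0, hQ0, abs_zero]; positivity
      · have hb := h r h0 hr
        have h3 := abs_sub_abs_le_abs_sub (Q r) (f x * (C * r ^ 2))
        rw [abs_mul (f x), abs_of_nonneg (show 0 ≤ C * r ^ 2 by positivity)] at h3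
        linarith
    have := (hO.hasFDerivAt (by norm_num)).hasDerivAt
    simpa using this
end
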